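/- arXiv:2508.16452 — 2 statements merged into one kernel-verified Lean document; each statement's English description precedes it below -/
import Mathlib

section
/- Let K be a Galois number field with ring of integers O_K. There exists a constant C > 0 such that for every nonzero non-unit x ∈ O_K, there exists a prime ideal I ⊴ O_K of prime norm p with x ∉ I and p ≤ C · log(C · N(x)), where N(x) = [O_K : xO_K]. -/
open NumberField

namespace NumberField.PrimeIdealBound

open _root_.Ideal Finset ArithmeticFunction

open scoped Classical

variable {K : Type*} [Field K] [NumberField K]

/-- The pairs `(P, k)` with `P` a nonzero prime ideal, `k ≥ 1` and `N(P) ^ k ≤ X`. -/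
def primePowSet (K : Type*) [Field K] [NumberField K] (X : ℕ) : Set (Ideal (𝓞 K) × ℕ) :=
  {Q | Q.1.IsPrime ∧ Q.1 ≠ ⊥ ∧ 1 ≤ Q.2 ∧ absNorm Q.1 ^ Q.2 ≤ X}

theorem one_lt_absNorm {P : Ideal (𝓞 K)} (hP : P.IsPrime) (hP0 : P ≠ ⊥) : 1 < absNorm P := by
  have h0 : absNorm P ≠ 0 := by rwa [Ne, absNorm_eq_zero_iff]
  have h1 : absNorm P ≠ 1 := by rw [Ne, absNorm_eq_one_iff]; exact hP.ne_top
  omega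

theorem primePowSet_finite (X : ℕ) : (primePowSet K X).Finite := by
  refine ((finite_setOfPred_absNorm_le (S := 𝓞 K) X).prod (Set.finite_le_nat X)).subset ?_
  rintro ⟨P, k⟩ ⟨hP, hP0, hk, hX⟩
  have h1 := one_lt_absNorm hP hP0
  refine ⟨(Nat.le_self_pow (by omega) _).trans hX, ?_⟩
  exact (Nat.lt_pow_self h1).le.trans hX

/-- `primePowSet` as a `Finset`. -/
noncomputable def primePows (K : Type*) [Field K] [NumberField K] (X : ℕ) :
    Finset (Ideal (𝓞 K) × ℕ) :=
  (primePowSet_finite (K := K) X).toFinset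

theorem mem_primePows {X : ℕ} {Q : Ideal (𝓞 K) × ℕ} :
    Q ∈ primePows K X ↔ Q.1.IsPrime ∧ Q.1 ≠ ⊥ ∧ 1 ≤ Q.2 ∧ absNorm Q.1 ^ Q.2 ≤ X := by
  simp [primePows, primePowSet]

theorem primePows_mono {X Y : ℕ} (h : X ≤ Y) : primePows K X ⊆ primePows K Y := by
  intro Q hQ
  rw [mem_primePows] at hQ ⊢
  exact ⟨hQ.1, hQ.2.1, hQ.2.2.1, hQ.2.2.2.trans h⟩

theorem log_absNorm_nonneg (P : Ideal (𝓞 K)) : 0 ≤ Real.log (absNorm P) :=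
  Real.log_natCast_nonneg _

/-- The rational prime below a nonzero prime ideal, whose norm is a power of that prime. -/
theorem exists_prime_mem {P : Ideal (𝓞 K)} (hP : P.IsPrime) (hP0 : P ≠ ⊥) :
    ∃ p f : ℕ, p.Prime ∧ (p : 𝓞 K) ∈ P ∧ 1 ≤ f ∧ f ≤ Module.finrank ℚ K ∧ absNorm P = p ^ f := by
  have : NeZero P := ⟨hP0⟩
  have hp := Nat.absNorm_under_prime P
  have hmem : ((absNorm (under ℤ P) : ℕ) : 𝓞 K) ∈ P := by
    have := absNorm_mem (under ℤ P)
    rw [Ideal.mem_comap] at this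
    simpa using this
  set p := absNorm (under ℤ P)
  have hdvd : absNorm P ∣ p ^ Module.finrank ℚ K := by
    have h := absNorm_dvd_absNorm_of_le ((span_singleton_le_iff_mem P).2 hmem)
    have h2 : Algebra.norm ℤ (p : 𝓞 K) = (p : ℤ) ^ Module.finrank ℚ K := by
      have := Algebra.norm_algebraMap (S := 𝓞 K) (p : ℤ)
      rw [RingOfIntegers.rank] at this
      simpa using this
    rw [absNorm_span_singleton, h2] at h
    simpa [Int.natAbs_pow] using h
  obtain ⟨f, hf, hPf⟩ := (Nat.dvd_prime_pow hp).1 hdvd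
  refine ⟨p, f, hp, hmem, ?_, hf, hPf⟩
  rcases Nat.eq_zero_or_pos f with rfl | h
  · have := one_lt_absNorm hP hP0
    simp [hPf] at this
  · exact h

/-- Distinct nonzero prime ideals containing `x` have norms whose product is at most `N(x)`. -/
theorem prod_absNorm_le {x : 𝓞 K} (hx : x ≠ 0) (s : Finset (Ideal (𝓞 K)))
    (hs : ∀ P ∈ s, P.IsPrime ∧ P ≠ ⊥ ∧ x ∈ P) :
    ∏ P ∈ s, absNorm P ≤ absNorm (span {x}) := by
  have hdvd : ∏ P ∈ s, P ∣ span {x} := by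
    refine Finset.prod_primes_dvd _ (fun P hP => ?_) (fun P hP => ?_)
    · exact prime_of_isPrime (hs P hP).2.1 (hs P hP).1
    · exact dvd_iff_le.2 ((span_singleton_le_iff_mem P).2 (hs P hP).2.2)
  rw [← map_prod]
  refine Nat.le_of_dvd (Nat.pos_of_ne_zero ?_) (map_dvd absNorm hdvd)
  simpa [absNorm_eq_zero_iff] using hx

theorem card_primes_over_le {p : ℕ} (hp : p.Prime) (s : Finset (Ideal (𝓞 K)))
    (hs : ∀ P ∈ s, P.IsPrime ∧ P ≠ ⊥ ∧ (p : 𝓞 K) ∈ P) : s.card ≤ Module.finrank ℚ K := by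
  have h1 := prod_absNorm_le (Nat.cast_ne_zero.2 hp.ne_zero) s hs
  have h2 : absNorm (span {(p : 𝓞 K)}) = p ^ Module.finrank ℚ K := by
    have := Algebra.norm_algebraMap (S := 𝓞 K) (p : ℤ)
    rw [RingOfIntegers.rank] at this
    rw [absNorm_span_singleton]
    simp only [algebraMap_int_eq, eq_intCast, Int.cast_natCast] at this
    rw [this]
    simp [Int.natAbs_pow]
  have h3 : p ^ s.card ≤ ∏ P ∈ s, absNorm P := by
    refine Finset.pow_card_le_prod _ _ _ fun P hP => ?_
    obtain ⟨hPp, hP0, hPm⟩ := hs P hP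
    obtain ⟨q, f, hq, hqm, hf, -, hN⟩ := exists_prime_mem hPp hP0
    have hpq : p = q := by
      by_contra hne
      have hc := ((Nat.coprime_primes hp hq).2 hne)
      have : IsCoprime (p : ℤ) (q : ℤ) := Nat.isCoprime_iff_coprime.2 hc
      obtain ⟨a, b, hab⟩ := this
      apply hPp.ne_top
      rw [eq_top_iff_one]
      have h : ((a * p + b * q : ℤ) : 𝓞 K) = 1 := by rw [hab]; simp
      rw [← h]
      push_cast
      exact add_mem (P.mul_mem_left _ hPm) (P.mul_mem_left _ hqm)
    rw [hN, hpq]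
    exact Nat.le_self_pow (by omega) _
  exact (Nat.pow_le_pow_iff_right hp.one_lt).1 (h3.trans (h1.trans h2.le))

/-- Sums over prime ideal powers are controlled by sums over rational prime powers. -/
theorem sum_primePows_le (X : ℕ) (g : ℕ → ℝ) (hg : ∀ n, 0 ≤ g n) :
    ∑ Q ∈ primePows K X, Real.log (absNorm Q.1) * g (absNorm Q.1 ^ Q.2) ≤
      (Module.finrank ℚ K : ℝ) ^ 2 * ∑ n ∈ Ioc 0 X, vonMangoldt n * g n := by
  have hmaps : ∀ Q ∈ primePows K X, absNorm Q.1 ^ Q.2 ∈ Ioc 0 X := by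
    intro Q hQ
    rw [mem_primePows] at hQ
    have := one_lt_absNorm hQ.1 hQ.2.1
    exact mem_Ioc.2 ⟨by positivity, hQ.2.2.2⟩
  rw [← Finset.sum_fiberwise_of_maps_to hmaps, Finset.mul_sum]
  refine Finset.sum_le_sum fun n hn => ?_
  set d := Module.finrank ℚ K
  have hterm : ∀ Q ∈ (primePows K X).filter (fun Q => absNorm Q.1 ^ Q.2 = n),
      Real.log (absNorm Q.1) * g (absNorm Q.1 ^ Q.2) ≤ d * (vonMangoldt n * g n) := by
    intro Q hQ
    obtain ⟨hQ', rfl⟩ := Finset.mem_filter.1 hQ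
    obtain ⟨hP, hP0, hk, -⟩ := mem_primePows.1 hQ'
    obtain ⟨p, f, hp, -, hf, hfd, hN⟩ := exists_prime_mem hP hP0
    rw [← mul_assoc]
    refine mul_le_mul_of_nonneg_right ?_ (hg _)
    rw [hN, vonMangoldt_apply_pow (by omega), vonMangoldt_apply_pow (by omega),
      vonMangoldt_apply_prime hp]
    push_cast
    rw [Real.log_pow]
    have : 0 ≤ Real.log p := Real.log_natCast_nonneg _
    gcongr
  have hcard : ((primePows K X).filter (fun Q => absNorm Q.1 ^ Q.2 = n)).card ≤ d := by
    rcases ((primePows K X).filter (fun Q => absNorm Q.1 ^ Q.2 = n)).eq_empty_or_nonempty with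
      h | ⟨Q₀, hQ₀⟩
    · simp [h]
    obtain ⟨hQ₀, hn₀⟩ := Finset.mem_filter.1 hQ₀
    obtain ⟨hP, hP0, hk, -⟩ := mem_primePows.1 hQ₀
    obtain ⟨p, f, hp, -, hf, -, hN⟩ := exists_prime_mem hP hP0
    rw [← Finset.card_image_of_injOn (f := Prod.fst)]
    · refine card_primes_over_le hp _ fun P hPm => ?_
      obtain ⟨Q, hQ, rfl⟩ := Finset.mem_image.1 hPm
      obtain ⟨hQ, hQn⟩ := Finset.mem_filter.1 hQ
      obtain ⟨hQP, hQP0, hQk, -⟩ := mem_primePows.1 hQ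
      refine ⟨hQP, hQP0, ?_⟩
      obtain ⟨q, f', hq, hqm, hf', -, hN'⟩ := exists_prime_mem hQP hQP0
      have : q = p := by
        rw [← hn₀, hN, hN', ← pow_mul, ← pow_mul] at hQn
        have h1 : q ∣ p ^ (f * Q₀.2) := by
          rw [← hQn]; exact dvd_pow_self _ (by positivity)
        exact (Nat.prime_dvd_prime_iff_eq hq hp).1 (hq.dvd_of_dvd_pow h1)
      rwa [← this]
    · intro Q hQ Q' hQ' h
      obtain ⟨hQ, hQn⟩ := Finset.mem_filter.1 hQ
      obtain ⟨hQ', hQn'⟩ := Finset.mem_filter.1 hQ'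
      obtain ⟨hQP, hQP0, -, -⟩ := mem_primePows.1 hQ
      refine Prod.ext h ?_
      rw [← hQn'] at hQn
      rw [← h] at hQn
      exact Nat.pow_right_injective (one_lt_absNorm hQP hQP0) hQn
  refine (Finset.sum_le_card_nsmul _ _ _ hterm).trans ?_
  rw [nsmul_eq_mul, sq, mul_assoc]
  have : 0 ≤ vonMangoldt n * g n := mul_nonneg vonMangoldt_nonneg (hg n)
  gcongr

/-- The logarithm of the norm of an ideal as a sum over the prime powers dividing it. -/
theorem log_absNorm_eq_sum {I : Ideal (𝓞 K)} (hI : I ≠ ⊥) {X : ℕ} (hX : absNorm I ≤ X) :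
    Real.log (absNorm I) =
      ∑ Q ∈ primePows K X, if I ≤ Q.1 ^ Q.2 then Real.log (absNorm Q.1) else 0 := by
  set F := UniqueFactorizationMonoid.normalizedFactors I with hF
  have hprime : ∀ P ∈ F.toFinset, P.IsPrime ∧ P ≠ ⊥ := by
    intro P hP
    have := UniqueFactorizationMonoid.prime_of_normalized_factor P (Multiset.mem_toFinset.1 hP)
    exact ⟨isPrime_of_prime this, this.ne_zero⟩
  have hcount : ∀ P : Ideal (𝓞 K), P.IsPrime → P ≠ ⊥ → ∀ k, I ≤ P ^ k ↔ k ≤ F.count P := by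
    intro P hP hP0 k
    have hirr := (prime_of_isPrime hP0 hP).irreducible
    rw [← dvd_iff_le, pow_dvd_iff_le_emultiplicity,
      UniqueFactorizationMonoid.emultiplicity_eq_count_normalizedFactors hirr hI]
    simp [hF]
  have h1 : Real.log (absNorm I) = ∑ P ∈ F.toFinset, F.count P * Real.log (absNorm P) := by
    conv_lhs => rw [← Ideal.prod_normalizedFactors_eq_self hI, Finset.prod_multiset_count, map_prod]
    push_cast
    rw [Real.log_prod]
    · simp [Real.log_pow, hF]
    · intro P hP
      have := one_lt_absNorm (hprime P hP).1 (hprime P hP).2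
      rw [map_pow]
      positivity
  rw [h1, ← Finset.sum_filter]
  have h2 : (primePows K X).filter (fun Q => I ≤ Q.1 ^ Q.2) =
      F.toFinset.biUnion (fun P => (Icc 1 (F.count P)).map ⟨Prod.mk P, Prod.mk_right_injective P⟩) := by
    ext ⟨P, k⟩
    simp only [Finset.mem_filter, mem_primePows, Finset.mem_biUnion, Finset.mem_map, mem_Icc,
      Function.Embedding.coeFn_mk, Prod.mk.injEq, exists_eq_right_right]
    constructor
    · rintro ⟨⟨hP, hP0, hk, -⟩, hle⟩
      rw [hcount P hP hP0] at hle
      refine ⟨?_, hk, hle⟩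
      rw [Multiset.mem_toFinset, ← Multiset.count_pos]
      omega
    · rintro ⟨hPF, hk, hkc⟩
      obtain ⟨hP, hP0⟩ := hprime P hPF
      have hle := (hcount P hP hP0 k).2 hkc
      refine ⟨⟨hP, hP0, hk, ?_⟩, hle⟩
      rw [← map_pow]
      refine le_trans (Nat.le_of_dvd (Nat.pos_of_ne_zero ?_) (absNorm_dvd_absNorm_of_le hle)) hX
      rwa [Ne, absNorm_eq_zero_iff]
  rw [h2, Finset.sum_biUnion]
  · refine Finset.sum_congr rfl fun P _ => ?_
    simp
  · intro P _ P' _ hne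
    rw [Function.onFun, Finset.disjoint_left]
    rintro ⟨A, k⟩ h h'
    simp only [Finset.mem_map, Function.Embedding.coeFn_mk, Prod.mk.injEq] at h h'
    obtain ⟨_, _, rfl, _⟩ := h
    obtain ⟨_, _, rfl, _⟩ := h'
    exact hne rfl

/-- Chebyshev's upper bound, weighted by `n ^ (1 / d - 1)`. -/
theorem exists_sum_vonMangoldt_rpow_le {d : ℕ} (hd : 0 < d) :
    ∃ C : ℝ, 0 < C ∧ ∀ X : ℕ,
      ∑ n ∈ Ioc 0 X, vonMangoldt n * ((n : ℝ) ^ (1 / d : ℝ) / n) ≤ C * (X : ℝ) ^ (1 / d : ℝ) := by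
  set c : ℝ := 2 * (Real.log 4 + 4)
  have hc : 0 < c := by positivity
  set t : ℝ := (2⁻¹ : ℝ) ^ (1 / d : ℝ)
  have hd' : (0 : ℝ) < 1 / d := by positivity
  have ht : t < 1 := Real.rpow_lt_one (by norm_num) (by norm_num) hd'
  have ht0 : 0 < 1 - t := by linarith
  refine ⟨c / (1 - t), by positivity, fun X => ?_⟩
  induction X using Nat.strong_induction_on with
  | _ X ih =>
    rcases Nat.eq_zero_or_pos X with rfl | hX
    · simp only [Ioc_self, Finset.sum_empty]; positivity
    have hX' : (0 : ℝ) < X := by exact_mod_cast hX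
    have hle : X / 2 ≤ X := by omega
    have hun : Ioc 0 X = Ioc 0 (X / 2) ∪ Ioc (X / 2) X := by
      rw [Finset.Ioc_union_Ioc_eq_Ioc (by omega) hle]
    rw [hun, Finset.sum_union (Finset.Ioc_disjoint_Ioc_of_le le_rfl)]
    have h1 : ∑ n ∈ Ioc 0 (X / 2), vonMangoldt n * ((n : ℝ) ^ (1 / d : ℝ) / n) ≤
        c / (1 - t) * (t * (X : ℝ) ^ (1 / d : ℝ)) := by
      refine (ih (X / 2) (by omega)).trans ?_
      rw [← Real.mul_rpow (by norm_num) hX'.le]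
      gcongr
      have : ((X / 2 : ℕ) : ℝ) ≤ (X : ℝ) / 2 := Nat.cast_div_le
      linarith
    have h2 : ∑ n ∈ Ioc (X / 2) X, vonMangoldt n * ((n : ℝ) ^ (1 / d : ℝ) / n) ≤
        c * (X : ℝ) ^ (1 / d : ℝ) := by
      have hterm : ∀ n ∈ Ioc (X / 2) X, vonMangoldt n * ((n : ℝ) ^ (1 / d : ℝ) / n) ≤
          vonMangoldt n * ((X : ℝ) ^ (1 / d : ℝ) / (X / 2)) := by
        intro n hn
        rw [mem_Ioc] at hn
        have : (X : ℝ) / 2 ≤ n := by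
          have : X ≤ 2 * n := by omega
          have : (X : ℝ) ≤ 2 * n := by exact_mod_cast this
          linarith
        have hnX : (n : ℝ) ≤ X := by exact_mod_cast hn.2
        have := vonMangoldt_nonneg (n := n)
        gcongr
      refine (Finset.sum_le_sum hterm).trans ?_
      rw [← Finset.sum_mul]
      have hpsi : ∑ n ∈ Ioc (X / 2) X, vonMangoldt n ≤ (Real.log 4 + 4) * X := by
        refine le_trans ?_ (Chebyshev.psi_le_const_mul_self hX'.le)
        rw [Chebyshev.psi, Nat.floor_natCast]
        exact Finset.sum_le_sum_of_subset_of_nonneg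
          (Finset.Ioc_subset_Ioc_left (by omega)) fun _ _ _ => vonMangoldt_nonneg
      calc _ ≤ (Real.log 4 + 4) * X * ((X : ℝ) ^ (1 / d : ℝ) / (X / 2)) := by gcongr
        _ = c * (X : ℝ) ^ (1 / d : ℝ) := by simp only [c]; field_simp
    refine (add_le_add h1 h2).trans (le_of_eq ?_)
    field_simp
    ring

/-- The elements of `𝓞 K` whose difference with `z` has all coordinates at most `R` in absolute
value with respect to the chosen integral basis. -/
noncomputable def box (z : 𝓞 K) (R : ℕ) : Finset (𝓞 K) :=
  (Fintype.piFinset fun _ => Icc (-(R : ℤ)) R).map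
    ((RingOfIntegers.basis K).equivFun.symm.toEquiv.toEmbedding.trans (addLeftEmbedding z))

theorem mem_box {z α : 𝓞 K} {R : ℕ} :
    α ∈ box z R ↔ ∀ i, |(RingOfIntegers.basis K).repr (α - z) i| ≤ R := by
  simp only [box, Finset.mem_map, Fintype.mem_piFinset, mem_Icc, abs_le,
    Function.Embedding.trans_apply, Equiv.coe_toEmbedding, LinearEquiv.coe_toEquiv,
    addLeftEmbedding_apply]
  constructor
  · rintro ⟨a, ha, rfl⟩ i
    rw [add_sub_cancel_left, ← Module.Basis.equivFun_apply, LinearEquiv.apply_symm_apply]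
    exact ha i
  · intro h
    refine ⟨(RingOfIntegers.basis K).equivFun (α - z), ?_, ?_⟩
    · simpa using h
    · rw [LinearEquiv.symm_apply_apply, add_sub_cancel]

theorem card_basisIndex :
    Fintype.card (Module.Free.ChooseBasisIndex ℤ (𝓞 K)) = Module.finrank ℚ K := by
  rw [← Module.finrank_eq_card_chooseBasisIndex, RingOfIntegers.rank]

theorem card_box (z : 𝓞 K) (R : ℕ) : (box z R).card = (2 * R + 1) ^ Module.finrank ℚ K := by
  rw [box, Finset.card_map, Fintype.card_piFinset]
  simp only [Int.card_Icc, Finset.prod_const, Finset.card_univ, card_basisIndex]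
  congr 1
  omega

theorem card_quotient (I : Ideal (𝓞 K)) : Nat.card (𝓞 K ⧸ I) = absNorm I := by
  rw [absNorm_apply, Submodule.cardQuot_apply]

theorem finite_quotient {I : Ideal (𝓞 K)} (hI : I ≠ ⊥) : Finite (𝓞 K ⧸ I) :=
  finiteQuotientOfFreeOfNeBot I hI

/-- A nonzero element of `I` with small coordinates. -/
theorem exists_small_mem {I : Ideal (𝓞 K)} (hI : I ≠ ⊥) {m : ℕ}
    (hm : absNorm I < (m + 1) ^ Module.finrank ℚ K) :
    ∃ β ∈ I, β ≠ 0 ∧ ∀ i, |(RingOfIntegers.basis K).repr β i| ≤ m := by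
  have := finite_quotient hI
  have := Fintype.ofFinite (𝓞 K ⧸ I)
  set e := (RingOfIntegers.basis K).equivFun
  obtain ⟨a, ha, b, hb, hne, hab⟩ := Finset.exists_ne_map_eq_of_card_lt_of_maps_to
    (s := Fintype.piFinset fun _ : Module.Free.ChooseBasisIndex ℤ (𝓞 K) => Icc (0 : ℤ) m)
    (t := (Finset.univ : Finset (𝓞 K ⧸ I))) (f := fun a => Ideal.Quotient.mk I (e.symm a))
    (by
      rw [Finset.card_univ, ← Nat.card_eq_fintype_card, card_quotient, Fintype.card_piFinset]
      simpa [card_basisIndex] using hm)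
    (fun _ _ => Finset.mem_univ _)
  refine ⟨e.symm a - e.symm b, Ideal.Quotient.eq.1 hab, ?_, fun i => ?_⟩
  · rw [sub_ne_zero]
    exact fun h => hne (e.symm.injective h)
  · rw [← map_sub, ← Module.Basis.equivFun_apply, LinearEquiv.apply_symm_apply]
    simp only [Fintype.mem_piFinset, mem_Icc] at ha hb
    have h1 := ha i
    have h2 := hb i
    rw [Pi.sub_apply, abs_le]
    omega

/-- Every class modulo `I` has a representative with coordinates `O(N(I) ^ (1 / d))`. -/
theorem exists_small_representative (K : Type*) [Field K] [NumberField K] :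
    ∃ C : ℕ, ∀ I : Ideal (𝓞 K), I ≠ ⊥ → ∀ m : ℕ, absNorm I < (m + 1) ^ Module.finrank ℚ K →
      ∀ γ : 𝓞 K, ∃ e : 𝓞 K, γ - e ∈ I ∧
        ∀ i, |(RingOfIntegers.basis K).repr e i| ≤ (C * m : ℕ) := by
  set b := RingOfIntegers.basis K with hb
  set B := integralBasis K with hB
  refine ⟨∑ k, ∑ i, ∑ j, (b.repr (b j * b i) k).natAbs, fun I hI m hm γ => ?_⟩
  obtain ⟨β, hβI, hβ0, hβ⟩ := exists_small_mem hI hm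
  have hβ0' : (β : K) ≠ 0 := by simpa using hβ0
  set q := B.repr ((γ : K) / β)
  set δ : 𝓞 K := ∑ i, ⌊q i⌋ • b i with hδ
  refine ⟨γ - β * δ, ?_, fun k => ?_⟩
  · rw [sub_sub_cancel]; exact I.mul_mem_right _ hβI
  have hrepr : ∀ i, |(b.repr (β * b i) k : ℤ)| ≤ m * ∑ j, ((b.repr (b j * b i) k).natAbs : ℤ) := by
    intro i
    have : b.repr (β * b i) k = ∑ j, b.repr β j * b.repr (b j * b i) k := by
      conv_lhs => rw [← b.sum_repr β, Finset.sum_mul, map_sum]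
      rw [Finsupp.finsetSum_apply]
      refine Finset.sum_congr rfl fun j _ => ?_
      rw [smul_mul_assoc, map_smul, Finsupp.smul_apply, smul_eq_mul]
    rw [this, Finset.mul_sum]
    refine (Finset.abs_sum_le_sum_abs _ _).trans (Finset.sum_le_sum fun j _ => ?_)
    rw [abs_mul, Int.natCast_natAbs]
    exact mul_le_mul_of_nonneg_right (hβ j) (abs_nonneg _)
  have hK : ((γ - β * δ : 𝓞 K) : K) = ∑ i, Int.fract (q i) • ((β * b i : 𝓞 K) : K) := by
    have h1 : (γ : K) = ∑ i, q i • ((β * b i : 𝓞 K) : K) := by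
      have := B.sum_repr ((γ : K) / β)
      calc (γ : K) = β * ((γ : K) / β) := by field_simp
        _ = β * ∑ i, q i • B i := by rw [this]
        _ = _ := by
          rw [Finset.mul_sum]
          refine Finset.sum_congr rfl fun i _ => ?_
          rw [hB, integralBasis_apply, mul_smul_comm]
          simp [hb]
    have h2 : ((β * δ : 𝓞 K) : K) = ∑ i, (⌊q i⌋ : ℚ) • ((β * b i : 𝓞 K) : K) := by
      rw [hδ, Finset.mul_sum, RingOfIntegers.coe_eq_algebraMap, map_sum]
      refine Finset.sum_congr rfl fun i _ => ?_
      simp [Algebra.smul_def]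
      ring
    rw [RingOfIntegers.coe_eq_algebraMap, map_sub, ← RingOfIntegers.coe_eq_algebraMap,
      ← RingOfIntegers.coe_eq_algebraMap, h1, h2, ← Finset.sum_sub_distrib]
    refine Finset.sum_congr rfl fun i _ => ?_
    rw [← sub_smul, Int.self_sub_floor]
  have hcoord : (b.repr (γ - β * δ) k : ℚ) = ∑ i, Int.fract (q i) * (b.repr (β * b i) k : ℚ) := by
    have h := congrArg (fun x => B.repr x k) hK
    simp only [map_sum, map_smul, Finsupp.finsetSum_apply, Finsupp.smul_apply, smul_eq_mul] at h
    rw [hB, integralBasis_repr_apply] at h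
    simp only [integralBasis_repr_apply] at h
    simpa using h
  have hfin : |(b.repr (γ - β * δ) k : ℚ)| ≤
      ((∑ i, m * ∑ j, ((b.repr (b j * b i) k).natAbs : ℤ) : ℤ) : ℚ) := by
    rw [hcoord]
    refine (Finset.abs_sum_le_sum_abs _ _).trans ?_
    rw [Int.cast_sum]
    refine Finset.sum_le_sum fun i _ => ?_
    rw [abs_mul, abs_of_nonneg (Int.fract_nonneg _)]
    have h1 := Int.cast_le (R := ℚ).2 (hrepr i)
    rw [Int.cast_abs] at h1
    exact (mul_le_of_le_one_left (abs_nonneg _) (Int.fract_lt_one _).le).trans h1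
  have hfin' : |b.repr (γ - β * δ) k| ≤ ∑ i, m * ∑ j, ((b.repr (b j * b i) k).natAbs : ℤ) := by
    exact_mod_cast hfin
  refine hfin'.trans ?_
  rw [← Finset.mul_sum, mul_comm]
  push_cast
  refine mul_le_mul_of_nonneg_right ?_ (Nat.cast_nonneg m)
  exact Finset.single_le_sum (f := fun k => ∑ i, ∑ j, |b.repr (b j * b i) k|)
    (fun k _ => Finset.sum_nonneg fun i _ => Finset.sum_nonneg fun j _ => abs_nonneg _)
    (Finset.mem_univ k)

/-- Number of elements of `I` in a box, up to enlarging the box: upper bound. -/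
theorem card_box_mem_mul_le {I : Ideal (𝓞 K)} (hI : I ≠ ⊥) {D : ℕ}
    (hD : ∀ γ : 𝓞 K, ∃ e : 𝓞 K, γ - e ∈ I ∧ ∀ i, |(RingOfIntegers.basis K).repr e i| ≤ D)
    (z : 𝓞 K) (R : ℕ) :
    ((box z R).filter (· ∈ I)).card * absNorm I ≤ (2 * (R + D) + 1) ^ Module.finrank ℚ K := by
  have := finite_quotient hI
  have := Fintype.ofFinite (𝓞 K ⧸ I)
  choose e heI heD using hD
  rw [← card_box z, ← card_quotient I, Nat.card_eq_fintype_card, ← Finset.card_univ,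
    ← Finset.card_product]
  refine Finset.card_le_card_of_injOn (fun x => x.1 + e (Quotient.out x.2)) ?_ ?_
  · rintro ⟨α, c⟩ h
    simp only [Finset.coe_product, Set.mem_prod, Finset.mem_coe, Finset.mem_filter, mem_box] at h
    simp only [Finset.mem_coe, mem_box]
    intro i
    have : α + e (Quotient.out c) - z = (α - z) + e (Quotient.out c) := by ring
    rw [this, map_add, Finsupp.add_apply]
    push_cast
    exact (abs_add_le _ _).trans (add_le_add (h.1.1 i) (heD _ i))
  · rintro ⟨α, c⟩ h ⟨α', c'⟩ h' heq
    simp only [Finset.coe_product, Set.mem_prod, Finset.mem_coe, Finset.mem_filter] at h h'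
    have hmk : ∀ (α : 𝓞 K) (c : 𝓞 K ⧸ I), α ∈ I →
        Ideal.Quotient.mk I (α + e (Quotient.out c)) = c := by
      intro α c hα
      rw [map_add, Ideal.Quotient.eq_zero_iff_mem.2 hα, zero_add,
        ← Ideal.Quotient.eq.2 (heI (Quotient.out c))]
      exact Quotient.out_eq c
    have hc : c = c' := by
      rw [← hmk α c h.1.2, ← hmk α' c' h'.1.2]
      exact congrArg _ heq
    subst hc
    simpa using heq

/-- Number of elements of `I` in a box, up to shrinking the box: lower bound. -/
theorem le_card_box_mem_mul {I : Ideal (𝓞 K)} (hI : I ≠ ⊥) {D : ℕ}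
    (hD : ∀ γ : 𝓞 K, ∃ e : 𝓞 K, γ - e ∈ I ∧ ∀ i, |(RingOfIntegers.basis K).repr e i| ≤ D)
    (z : 𝓞 K) (R : ℕ) :
    (2 * R + 1) ^ Module.finrank ℚ K ≤ ((box z (R + D)).filter (· ∈ I)).card * absNorm I := by
  have := finite_quotient hI
  have := Fintype.ofFinite (𝓞 K ⧸ I)
  choose e heI heD using hD
  rw [← card_box z, ← card_quotient I, Nat.card_eq_fintype_card, ← Finset.card_univ,
    ← Finset.card_product]
  set r : 𝓞 K → 𝓞 K := fun γ => e (Quotient.out (Ideal.Quotient.mk I γ))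
  have hr : ∀ γ, γ - r γ ∈ I := by
    intro γ
    rw [← Ideal.Quotient.eq, ← Ideal.Quotient.eq.2 (heI (Quotient.out (Ideal.Quotient.mk I γ)))]
    exact (Quotient.out_eq _).symm
  refine Finset.card_le_card_of_injOn (fun γ => (γ - r γ, Ideal.Quotient.mk I γ)) ?_ ?_
  · intro γ h
    simp only [Finset.mem_coe, mem_box] at h
    simp only [Finset.coe_product, Set.mem_prod, Finset.mem_coe, Finset.mem_filter, mem_box]
    refine ⟨⟨fun i => ?_, hr γ⟩, Finset.mem_univ _⟩
    have : γ - r γ - z = (γ - z) - r γ := by ring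
    rw [this, map_sub, Finsupp.sub_apply]
    push_cast
    exact (abs_sub _ _).trans (add_le_add (h i) (heD _ i))
  · intro γ _ γ' _ heq
    simp only [Prod.mk.injEq, r] at heq
    rw [heq.2] at heq
    simpa using heq.1

/-- Translated boxes on which the norm is comparable to the `d`-th power of the side length. -/
theorem exists_box_absNorm_bounds (K : Type*) [Field K] [NumberField K] :
    ∃ c : ℕ, 1 ≤ c ∧ ∀ R : ℕ, ∃ z : 𝓞 K, ∀ α ∈ box z R,
      R ^ Module.finrank ℚ K ≤ absNorm (span {α}) ∧
        absNorm (span {α}) ≤ (c * R) ^ Module.finrank ℚ K := by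
  set b := RingOfIntegers.basis K with hb
  set c₁ : ℝ := ∑ σ : K →ₐ[ℚ] ℂ, ∑ i, ‖σ (b i)‖ with hc₁
  set M : ℕ := ⌈c₁⌉₊ + 1
  have hM : c₁ + 1 ≤ M := by
    push_cast [M]
    linarith [Nat.le_ceil c₁]
  refine ⟨2 * M, by omega, fun R => ⟨((M * R : ℕ) : 𝓞 K), fun α hα => ?_⟩⟩
  rw [mem_box] at hα
  set z : 𝓞 K := ((M * R : ℕ) : 𝓞 K)
  have hsmall : ∀ σ : K →ₐ[ℚ] ℂ, ‖σ (α - z : 𝓞 K)‖ ≤ c₁ * R := by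
    intro σ
    have h1 : σ ((α - z : 𝓞 K) : K) = ∑ i, (b.repr (α - z) i : ℂ) * σ (b i) := by
      conv_lhs => rw [← b.sum_repr (α - z)]
      simp
    rw [h1]
    calc _ ≤ ∑ i, ‖(b.repr (α - z) i : ℂ) * σ (b i)‖ := norm_sum_le _ _
      _ ≤ ∑ i, R * ‖σ (b i)‖ := by
        refine Finset.sum_le_sum fun i _ => ?_
        rw [norm_mul]
        refine mul_le_mul_of_nonneg_right ?_ (norm_nonneg _)
        rw [Complex.norm_intCast]
        exact_mod_cast hα i
      _ = (∑ i, ‖σ (b i)‖) * R := by rw [← Finset.mul_sum, mul_comm]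
      _ ≤ c₁ * R := by
        gcongr
        exact Finset.single_le_sum (f := fun σ : K →ₐ[ℚ] ℂ => ∑ i, ‖σ (b i)‖)
          (fun σ _ => Finset.sum_nonneg fun i _ => norm_nonneg _) (Finset.mem_univ σ)
  have hz : ∀ σ : K →ₐ[ℚ] ℂ, ‖σ (z : K)‖ = M * R := by
    intro σ
    simp [z]
  have hR : (0 : ℝ) ≤ R := Nat.cast_nonneg R
  have hlow : ∀ σ : K →ₐ[ℚ] ℂ, (R : ℝ) ≤ ‖σ (α : K)‖ := by
    intro σ
    have h1 : σ (z : K) = σ (α : K) - σ ((α - z : 𝓞 K) : K) := by simp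
    have h2 := norm_sub_le (σ (α : K)) (σ ((α - z : 𝓞 K) : K))
    rw [← h1, hz] at h2
    nlinarith [hsmall σ, mul_le_mul_of_nonneg_right hM hR]
  have hup : ∀ σ : K →ₐ[ℚ] ℂ, ‖σ (α : K)‖ ≤ 2 * M * R := by
    intro σ
    have h1 : σ (α : K) = σ (z : K) + σ ((α - z : 𝓞 K) : K) := by simp
    have h2 := norm_add_le (σ (z : K)) (σ ((α - z : 𝓞 K) : K))
    rw [← h1, hz] at h2
    nlinarith [hsmall σ, mul_le_mul_of_nonneg_right hM hR]
  have hnorm : (absNorm (span {α}) : ℝ) = ∏ σ : K →ₐ[ℚ] ℂ, ‖σ (α : K)‖ := by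
    rw [← norm_prod, ← Algebra.norm_eq_prod_embeddings ℚ ℂ, absNorm_span_singleton,
      ← Algebra.coe_norm_int, Nat.cast_natAbs]
    simp
  have hcard : (Finset.univ : Finset (K →ₐ[ℚ] ℂ)).card = Module.finrank ℚ K := by
    rw [Finset.card_univ, AlgHom.card]
  constructor
  · have h : (R : ℝ) ^ Module.finrank ℚ K ≤ absNorm (span {α}) := by
      rw [hnorm, ← hcard, ← Finset.prod_const]
      exact Finset.prod_le_prod (fun _ _ => hR) fun σ _ => hlow σ
    exact_mod_cast h
  · have h : (absNorm (span {α}) : ℝ) ≤ (2 * M * R : ℝ) ^ Module.finrank ℚ K := by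
      rw [hnorm, ← hcard, ← Finset.prod_const]
      exact Finset.prod_le_prod (fun _ _ => norm_nonneg _) fun σ _ => hup σ
    exact_mod_cast h

theorem one_add_pow_le {t T : ℝ} (ht : 0 ≤ t) (hT : t ≤ T) (k : ℕ) :
    (1 + t) ^ k ≤ 1 + k * t * (1 + T) ^ k := by
  induction k with
  | zero => simp
  | succ k ih =>
    have h1 : (1 + t) ^ k ≤ (1 + T) ^ k := by gcongr
    have h2 : (1 + T) ^ k ≤ (1 + T) ^ (k + 1) := pow_le_pow_right₀ (by linarith) (by omega)
    calc (1 + t) ^ (k + 1) = (1 + t) ^ k + t * (1 + t) ^ k := by ring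
      _ ≤ (1 + k * t * (1 + T) ^ k) + t * (1 + T) ^ k := by gcongr
      _ = 1 + (k + 1) * t * (1 + T) ^ k := by ring
      _ ≤ 1 + ((k + 1 : ℕ) : ℝ) * t * (1 + T) ^ (k + 1) := by push_cast; gcongr

/-- The number of elements of a nonzero ideal in a box, with error term. -/
theorem exists_card_box_mem_bounds (K : Type*) [Field K] [NumberField K] (c : ℕ) :
    ∃ A : ℝ, 0 ≤ A ∧ ∀ I : Ideal (𝓞 K), I ≠ ⊥ → ∀ (z : 𝓞 K) (R : ℕ),
      (2 * R + 1 : ℝ) ^ Module.finrank ℚ K * (1 / absNorm I - A / (2 * R + 1) *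
        ((absNorm I : ℝ) ^ (1 / Module.finrank ℚ K : ℝ) / absNorm I)) ≤
          ((box z R).filter (· ∈ I)).card ∧
      (absNorm I ≤ (c * R) ^ Module.finrank ℚ K →
        (((box z R).filter (· ∈ I)).card : ℝ) ≤
          (2 * R + 1 : ℝ) ^ Module.finrank ℚ K * (1 / absNorm I + A / (2 * R + 1) *
            ((absNorm I : ℝ) ^ (1 / Module.finrank ℚ K : ℝ) / absNorm I))) := by
  obtain ⟨C, hC⟩ := exists_small_representative K
  set d := Module.finrank ℚ K with hd
  have hd0 : 0 < d := Module.finrank_pos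
  have hd1 : (1 : ℝ) ≤ d := by exact_mod_cast hd0
  set T : ℝ := 2 * C * c with hT
  have hT0 : 0 ≤ T := by positivity
  have hT1 : 1 ≤ (1 + T) ^ d := one_le_pow₀ (by linarith)
  refine ⟨2 * d * C * (1 + T) ^ d, by positivity, fun I hI z R => ?_⟩
  have hq0 : 0 < absNorm I := Nat.pos_of_ne_zero (by rwa [Ne, absNorm_eq_zero_iff])
  set q : ℕ := absNorm I with hq
  have hqR : (0 : ℝ) < q := by exact_mod_cast hq0
  set u : ℝ := (q : ℝ) ^ (1 / d : ℝ) with hu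
  have hu0 : 0 ≤ u := by positivity
  have hud : u ^ d = q := by
    rw [hu, one_div, Real.rpow_inv_natCast_pow hqR.le hd0.ne']
  set m := ⌊u⌋₊
  have hmu : (m : ℝ) ≤ u := Nat.floor_le hu0
  have hm : q < (m + 1) ^ d := by
    have : (q : ℝ) < (m + 1 : ℝ) ^ d := by
      rw [← hud]
      exact pow_lt_pow_left₀ (Nat.lt_floor_add_one u) hu0 hd0.ne'
    exact_mod_cast this
  have hrep := hC I hI m hm
  set D := C * m
  have hDu : (D : ℝ) ≤ C * u := by
    push_cast [D]
    gcongr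
  set n : ℝ := 2 * R + 1 with hn
  have hn0 : 0 < n := by positivity
  set N : ℝ := (((box z R).filter (· ∈ I)).card : ℝ) with hN
  constructor
  · have key : n ^ d * (1 - d * (2 * D / n)) ≤ N * q := by
      by_cases hDR : D ≤ R
      · have h := le_card_box_mem_mul hI hrep z (R - D)
        rw [Nat.sub_add_cancel hDR] at h
        have h' : (2 * (R - D) + 1 : ℝ) ^ d ≤ N * q := by
          have : (((2 * (R - D) + 1) ^ d : ℕ) : ℝ) ≤
              ((((box z R).filter (· ∈ I)).card * q : ℕ) : ℝ) := Nat.cast_le.2 h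
          push_cast [Nat.cast_sub hDR] at this
          exact this
        have hDR' : (D : ℝ) ≤ R := by exact_mod_cast hDR
        have hfrac : 2 * (D : ℝ) / n ≤ 1 := by rw [div_le_one hn0]; linarith
        have hb := one_add_mul_le_pow (a := -(2 * (D : ℝ) / n)) (by linarith) d
        calc n ^ d * (1 - d * (2 * D / n)) ≤ n ^ d * (1 + -(2 * (D : ℝ) / n)) ^ d := by
              gcongr
              linarith
          _ = (2 * (R - D) + 1 : ℝ) ^ d := by
              rw [← mul_pow]
              congr 1
              field_simp
              rw [hn]; ring
          _ ≤ N * q := h'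
      · have hDR' : (R : ℝ) + 1 ≤ D := by exact_mod_cast not_le.1 hDR
        have hfrac : 1 ≤ 2 * (D : ℝ) / n := by rw [le_div_iff₀ hn0]; linarith
        have h1 : 1 - d * (2 * (D : ℝ) / n) ≤ 0 := by nlinarith
        exact (mul_nonpos_of_nonneg_of_nonpos (by positivity) h1).trans (by positivity)
    have h2 : d * (2 * (D : ℝ) / n) ≤ 2 * d * C * (1 + T) ^ d / n * u := by
      calc d * (2 * (D : ℝ) / n) ≤ d * (2 * (C * u) / n) := by gcongr
        _ = 2 * d * C / n * u * 1 := by ring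
        _ ≤ 2 * d * C / n * u * (1 + T) ^ d := by gcongr
        _ = _ := by ring
    have h3 : n ^ d * (1 - 2 * d * C * (1 + T) ^ d / n * u) ≤ N * q :=
      le_trans (by gcongr) key
    calc _ = n ^ d * (1 - 2 * d * C * (1 + T) ^ d / n * u) / q := by ring
      _ ≤ N := by rwa [div_le_iff₀ hqR]
  · intro hqc
    have huc : u ≤ c * R := by
      refine le_of_pow_le_pow_left₀ hd0.ne' (by positivity) ?_
      rw [hud]
      exact_mod_cast hqc
    have h : N * q ≤ (2 * (R + D) + 1 : ℝ) ^ d := by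
      have h' := Nat.cast_le (α := ℝ) |>.2 (card_box_mem_mul_le hI hrep z R)
      push_cast at h'
      exact h'
    have ht : 2 * (D : ℝ) / n ≤ T := by
      rw [div_le_iff₀ hn0]
      calc 2 * (D : ℝ) ≤ 2 * (C * (c * R)) := by
            have := hDu.trans (mul_le_mul_of_nonneg_left huc (Nat.cast_nonneg C))
            linarith
        _ = T * R := by rw [hT]; ring
        _ ≤ T * n := by gcongr; rw [hn]; linarith [Nat.cast_nonneg (α := ℝ) R]
    have key : N * q ≤ n ^ d * (1 + 2 * d * C * (1 + T) ^ d / n * u) := by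
      calc N * q ≤ (2 * (R + D) + 1 : ℝ) ^ d := h
        _ = n ^ d * (1 + 2 * (D : ℝ) / n) ^ d := by
            rw [← mul_pow]
            congr 1
            field_simp
            rw [hn]; ring
        _ ≤ n ^ d * (1 + d * (2 * (D : ℝ) / n) * (1 + T) ^ d) := by
            gcongr
            exact one_add_pow_le (by positivity) ht d
        _ ≤ n ^ d * (1 + d * (2 * (C * u) / n) * (1 + T) ^ d) := by gcongr
        _ = _ := by ring
    calc N ≤ n ^ d * (1 + 2 * d * C * (1 + T) ^ d / n * u) / q := by rwa [le_div_iff₀ hqR]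
      _ = _ := by ring

/-- Mertens' estimate for prime ideals. -/
theorem exists_mertens (K : Type*) [Field K] [NumberField K] :
    ∃ c : ℕ, 1 ≤ c ∧ ∃ A : ℝ, 0 ≤ A ∧ ∀ R : ℕ, 1 ≤ R →
      Module.finrank ℚ K * Real.log R ≤ (∑ Q ∈ primePows K ((c * R) ^ Module.finrank ℚ K),
        Real.log (absNorm Q.1) * (1 / (absNorm Q.1 ^ Q.2 : ℕ))) + A ∧
      (∑ Q ∈ primePows K ((c * R) ^ Module.finrank ℚ K),
        Real.log (absNorm Q.1) * (1 / (absNorm Q.1 ^ Q.2 : ℕ))) ≤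
          Module.finrank ℚ K * Real.log R + A := by
  obtain ⟨c, hc, hbox⟩ := exists_box_absNorm_bounds K
  obtain ⟨A, hA, hcount⟩ := exists_card_box_mem_bounds K c
  set d := Module.finrank ℚ K with hd
  have hd0 : 0 < d := Module.finrank_pos
  obtain ⟨C, hC, hsum⟩ := exists_sum_vonMangoldt_rpow_le hd0
  have hc' : (1 : ℝ) ≤ c := by exact_mod_cast hc
  have hlogc : 0 ≤ Real.log c := Real.log_nonneg hc'
  refine ⟨c, hc, A * (d ^ 2 * (C * c)) + d * Real.log c, by positivity, fun R hR => ?_⟩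
  obtain ⟨z, hz⟩ := hbox R
  set X := (c * R) ^ d with hX
  set n : ℝ := 2 * R + 1 with hn
  have hn0 : 0 < n := by positivity
  have hR' : (1 : ℝ) ≤ R := by exact_mod_cast hR
  have hnd : 0 < n ^ d := by positivity
  set H := ∑ Q ∈ primePows K X, Real.log (absNorm Q.1) * (1 / (absNorm Q.1 ^ Q.2 : ℕ)) with hH
  set w : ℕ → ℝ := fun k => (k : ℝ) ^ (1 / d : ℝ) / k with hw
  set G := ∑ Q ∈ primePows K X, Real.log (absNorm Q.1) * w (absNorm Q.1 ^ Q.2) with hG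
  set S := ∑ α ∈ box z R, Real.log (absNorm (span {α})) with hS
  have hcardbox : ((box z R).card : ℝ) = n ^ d := by
    rw [card_box]; push_cast; rfl
  have hGle : A / n * G ≤ A * (d ^ 2 * (C * c)) := by
    have h1 : G ≤ d ^ 2 * (C * (X : ℝ) ^ (1 / d : ℝ)) := by
      refine (sum_primePows_le X w fun k => by positivity).trans ?_
      gcongr
      exact hsum X
    have h2 : (X : ℝ) ^ (1 / d : ℝ) = c * R := by
      rw [hX, one_div]
      push_cast
      exact Real.pow_rpow_inv_natCast (by positivity) hd0.ne'
    rw [h2] at h1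
    have h3 : G ≤ d ^ 2 * (C * c) * n := by
      refine h1.trans ?_
      calc (d : ℝ) ^ 2 * (C * (c * R)) = d ^ 2 * (C * c) * R := by ring
        _ ≤ _ := by gcongr; rw [hn]; linarith
    calc A / n * G ≤ A / n * (d ^ 2 * (C * c) * n) := by gcongr
      _ = _ := by field_simp
  have hSeq : S = ∑ Q ∈ primePows K X,
      Real.log (absNorm Q.1) * ((box z R).filter (· ∈ Q.1 ^ Q.2)).card := by
    have h1 : ∀ α ∈ box z R, Real.log (absNorm (span {α})) =
        ∑ Q ∈ primePows K X, if α ∈ Q.1 ^ Q.2 then Real.log (absNorm Q.1) else 0 := by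
      intro α hα
      obtain ⟨hlow, hup⟩ := hz α hα
      have hne : span {α} ≠ ⊥ := by
        rw [Ne, ← absNorm_eq_zero_iff]
        have : 0 < R ^ d := by positivity
        omega
      rw [log_absNorm_eq_sum hne hup]
      simp only [span_singleton_le_iff_mem]
    rw [hS, Finset.sum_congr rfl h1, Finset.sum_comm]
    refine Finset.sum_congr rfl fun Q _ => ?_
    rw [← Finset.sum_filter, Finset.sum_const, nsmul_eq_mul, mul_comm]
  have hSlow : n ^ d * (d * Real.log R) ≤ S := by
    rw [← hcardbox, ← nsmul_eq_mul]
    refine Finset.card_nsmul_le_sum _ _ _ fun α hα => ?_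
    rw [← Real.log_pow]
    refine Real.log_le_log (by positivity) ?_
    exact_mod_cast (hz α hα).1
  have hSup : S ≤ n ^ d * (d * Real.log R + d * Real.log c) := by
    rw [← hcardbox, ← nsmul_eq_mul]
    refine Finset.sum_le_card_nsmul _ _ _ fun α hα => ?_
    obtain ⟨hlow, hup⟩ := hz α hα
    rw [← mul_add, ← Real.log_mul (by positivity) (by positivity), ← Real.log_pow]
    have hpos : 0 < absNorm (span {α}) := lt_of_lt_of_le (by positivity) hlow
    refine Real.log_le_log (by exact_mod_cast hpos) ?_
    rw [mul_comm (R : ℝ)]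
    exact_mod_cast hup
  have hpow : ∀ Q ∈ primePows K X, Q.1 ^ Q.2 ≠ ⊥ ∧ absNorm (Q.1 ^ Q.2) = absNorm Q.1 ^ Q.2 := by
    intro Q hQ
    exact ⟨pow_ne_zero _ (mem_primePows.1 hQ).2.1, map_pow _ _ _⟩
  have hSH : S ≤ n ^ d * (H + A / n * G) := by
    rw [hSeq, hH, hG, Finset.mul_sum, ← Finset.sum_add_distrib, Finset.mul_sum]
    refine Finset.sum_le_sum fun Q hQ => ?_
    have h := (hcount _ (hpow Q hQ).1 z R).2
      (by rw [(hpow Q hQ).2]; exact (mem_primePows.1 hQ).2.2.2)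
    rw [(hpow Q hQ).2] at h
    refine (mul_le_mul_of_nonneg_left h (log_absNorm_nonneg _)).trans (le_of_eq ?_)
    simp only [hw]
    ring
  have hHS : n ^ d * (H - A / n * G) ≤ S := by
    rw [hSeq, hH, hG, Finset.mul_sum, ← Finset.sum_sub_distrib, Finset.mul_sum]
    refine Finset.sum_le_sum fun Q hQ => ?_
    have h := (hcount _ (hpow Q hQ).1 z R).1
    rw [(hpow Q hQ).2] at h
    refine le_trans (le_of_eq ?_) (mul_le_mul_of_nonneg_left h (log_absNorm_nonneg _))
    simp only [hw]
    ring
  have h1 := le_of_mul_le_mul_left (hSlow.trans hSH) hnd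
  have h2 := le_of_mul_le_mul_left (hHS.trans hSup) hnd
  have h3 : 0 ≤ d * Real.log c := by positivity
  constructor <;> linarith

/-- Chebyshev's lower bound for prime ideal powers along a sequence of `d`-th powers. -/
theorem exists_le_sum_primePows (K : Type*) [Field K] [NumberField K] :
    ∃ a b : ℕ, 1 ≤ a ∧ 1 ≤ b ∧ ∀ r : ℕ, 1 ≤ r →
      ((a * r : ℝ)) ^ Module.finrank ℚ K ≤
        ∑ Q ∈ primePows K ((b * r) ^ Module.finrank ℚ K), Real.log (absNorm Q.1) := by
  obtain ⟨c, hc, A, hA, hmert⟩ := exists_mertens K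
  set d := Module.finrank ℚ K with hd
  have hd0 : 0 < d := Module.finrank_pos
  have hd1 : (1 : ℝ) ≤ d := by exact_mod_cast hd0
  set M := ⌈Real.exp (2 * A + 1)⌉₊
  have hM0 : 0 < M := Nat.ceil_pos.2 (Real.exp_pos _)
  have hM : 2 * A + 1 ≤ d * Real.log M := by
    have h1 : 2 * A + 1 ≤ Real.log M := by
      rw [Real.le_log_iff_exp_le (by exact_mod_cast hM0)]
      exact Nat.le_ceil _
    nlinarith
  refine ⟨c, c * M, hc, Nat.mul_pos hc hM0, fun r hr => ?_⟩
  have h1 := (hmert (M * r) (Nat.mul_pos hM0 hr)).1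
  have h2 := (hmert r hr).2
  rw [← mul_assoc] at h1
  set X := (c * r) ^ d with hX
  set Y := (c * M * r) ^ d with hY
  have hXY : X ≤ Y := by
    rw [hX, hY]
    exact Nat.pow_le_pow_left (Nat.mul_le_mul_right _ (Nat.le_mul_of_pos_right _ hM0)) _
  have hX0 : 0 < X := by positivity
  have hX0' : (0 : ℝ) < X := by exact_mod_cast hX0
  rw [← Finset.sum_sdiff (primePows_mono hXY)] at h1
  have hlog : Real.log ((M * r : ℕ) : ℝ) = Real.log M + Real.log r := by
    push_cast
    exact Real.log_mul (by positivity) (by positivity)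
  rw [hlog] at h1
  have h3 : ∑ Q ∈ primePows K Y \ primePows K X,
      Real.log (absNorm Q.1) * (1 / (absNorm Q.1 ^ Q.2 : ℕ)) ≤
        (∑ Q ∈ primePows K Y, Real.log (absNorm Q.1)) / X := by
    rw [Finset.sum_div]
    refine (Finset.sum_le_sum fun Q hQ => ?_).trans
      (Finset.sum_le_sum_of_subset_of_nonneg Finset.sdiff_subset fun Q _ _ =>
        div_nonneg (log_absNorm_nonneg _) hX0'.le)
    obtain ⟨hQY, hQX⟩ := Finset.mem_sdiff.1 hQ
    obtain ⟨hP, hP0, hk, -⟩ := mem_primePows.1 hQY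
    have hlt : X < absNorm Q.1 ^ Q.2 := by
      by_contra hle
      exact hQX (mem_primePows.2 ⟨hP, hP0, hk, not_lt.1 hle⟩)
    have hlt' : (X : ℝ) ≤ ((absNorm Q.1 ^ Q.2 : ℕ) : ℝ) := Nat.cast_le.2 hlt.le
    rw [div_eq_mul_one_div (Real.log _)]
    exact mul_le_mul_of_nonneg_left
      (one_div_le_one_div_of_le hX0' hlt') (log_absNorm_nonneg _)
  have h4 : 1 ≤ (∑ Q ∈ primePows K Y, Real.log (absNorm Q.1)) / X := by
    nlinarith
  rw [le_div_iff₀ hX0', one_mul] at h4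
  exact_mod_cast h4

/-- The prime ideals of prime norm at most `X`. -/
noncomputable def primeNormIdeals (K : Type*) [Field K] [NumberField K] (X : ℕ) :
    Finset (Ideal (𝓞 K)) :=
  ((primePows K X).filter fun Q => (absNorm Q.1 ^ Q.2).Prime).image Prod.fst

theorem mem_primeNormIdeals {X : ℕ} {P : Ideal (𝓞 K)} (h : P ∈ primeNormIdeals K X) :
    P.IsPrime ∧ P ≠ ⊥ ∧ (absNorm P).Prime ∧ absNorm P ≤ X := by
  obtain ⟨Q, hQ, rfl⟩ := Finset.mem_image.1 h
  obtain ⟨hQ, hp⟩ := Finset.mem_filter.1 hQ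
  obtain ⟨hP, hP0, -, hX⟩ := mem_primePows.1 hQ
  have hk := Nat.Prime.eq_one_of_pow hp
  rw [hk, pow_one] at hp hX
  exact ⟨hP, hP0, hp, hX⟩

/-- Prime ideal powers that are not prime ideals of prime norm contribute little. -/
theorem sum_primePows_le_sum_primeNormIdeals {X : ℕ} (hX : 1 ≤ X) :
    ∑ Q ∈ primePows K X, Real.log (absNorm Q.1) ≤
      (∑ P ∈ primeNormIdeals K X, Real.log (absNorm P)) +
        Module.finrank ℚ K ^ 2 * (2 * √(X : ℝ) * Real.log X) := by
  rw [← Finset.sum_filter_add_sum_filter_not (primePows K X)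
    (fun Q => (absNorm Q.1 ^ Q.2).Prime)]
  refine add_le_add (le_of_eq ?_) ?_
  · rw [primeNormIdeals, Finset.sum_image]
    intro Q hQ Q' hQ' h
    refine Prod.ext h ?_
    rw [Nat.Prime.eq_one_of_pow (Finset.mem_filter.1 hQ).2,
      Nat.Prime.eq_one_of_pow (Finset.mem_filter.1 hQ').2]
  · have h := sum_primePows_le (K := K) X (fun n => if n.Prime then 0 else 1)
      (fun n => by split_ifs <;> norm_num)
    have h1 : ∑ n ∈ Ioc 0 X, vonMangoldt n * (if n.Prime then (0 : ℝ) else 1) =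
        Chebyshev.psi X - Chebyshev.theta X := by
      rw [Chebyshev.psi_sub_theta_eq_sum_not_prime, Nat.floor_natCast, Finset.sum_filter]
      refine Finset.sum_congr rfl fun n _ => ?_
      by_cases hn : n.Prime <;> simp [hn]
    have h2 := Chebyshev.psi_sub_theta_le (x := X) (by exact_mod_cast hX)
    rw [h1] at h
    refine le_trans (le_of_eq ?_) (h.trans (mul_le_mul_of_nonneg_left h2 (by positivity)))
    rw [Finset.sum_filter]
    refine Finset.sum_congr rfl fun Q _ => ?_
    by_cases hn : (absNorm Q.1 ^ Q.2).Prime <;> simp [hn]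

/-- Chebyshev's lower bound for prime ideals of prime norm. -/
theorem exists_le_sum_primeNormIdeals (K : Type*) [Field K] [NumberField K] :
    ∃ b : ℕ, 1 ≤ b ∧ ∃ κ X₀ : ℝ, 0 < κ ∧ 0 ≤ X₀ ∧ ∀ r : ℕ, 1 ≤ r →
      X₀ ≤ ((b * r : ℝ)) ^ Module.finrank ℚ K →
        κ * (b * r : ℝ) ^ Module.finrank ℚ K ≤
          ∑ P ∈ primeNormIdeals K ((b * r) ^ Module.finrank ℚ K), Real.log (absNorm P) := by
  obtain ⟨a, b, ha, hb, hab⟩ := exists_le_sum_primePows K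
  set d := Module.finrank ℚ K with hd
  have hd0 : 0 < d := Module.finrank_pos
  have ha' : (0 : ℝ) < a := by exact_mod_cast ha
  have hb' : (0 : ℝ) < b := by exact_mod_cast hb
  set κ : ℝ := ((a : ℝ) / b) ^ d / 2 with hκ
  have hκ0 : 0 < κ := by positivity
  have hd' : (0 : ℝ) < d := by exact_mod_cast hd0
  have hlittle := (isLittleO_log_rpow_atTop (r := 1 / 2) (by norm_num)).def
    (c := κ / (2 * d ^ 2)) (by positivity)
  obtain ⟨X₁, hX₁⟩ := Filter.eventually_atTop.1 hlittle
  refine ⟨b, hb, κ, max X₁ 0, hκ0, le_max_right _ _, fun r hr hX => ?_⟩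
  have h1 := hab r hr
  set X := (b * r) ^ d with hXdef
  have hX1 : 1 ≤ X := Nat.one_le_pow _ _ (Nat.mul_pos hb hr)
  have hXR : (X : ℝ) = (b * r : ℝ) ^ d := by push_cast [hXdef]; rfl
  rw [← hXR] at hX ⊢
  have hX1' : (1 : ℝ) ≤ X := by exact_mod_cast hX1
  have h2 := sum_primePows_le_sum_primeNormIdeals (K := K) hX1
  have h3 := hX₁ X ((le_max_left _ _).trans hX)
  rw [← Real.sqrt_eq_rpow, Real.norm_of_nonneg (Real.log_nonneg hX1'),
    Real.norm_of_nonneg (Real.sqrt_nonneg _)] at h3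
  have h4 : (d : ℝ) ^ 2 * (2 * √(X : ℝ) * Real.log X) ≤ κ * X := by
    calc (d : ℝ) ^ 2 * (2 * √(X : ℝ) * Real.log X)
        ≤ d ^ 2 * (2 * √(X : ℝ) * (κ / (2 * d ^ 2) * √(X : ℝ))) := by gcongr
      _ = κ * (√(X : ℝ) * √(X : ℝ)) := by field_simp
      _ = κ * X := by rw [Real.mul_self_sqrt (by positivity)]
  have h5 : (a * r : ℝ) ^ d = 2 * κ * X := by
    rw [hXR, hκ, div_pow, mul_pow, mul_pow]
    field_simp
  linarith

end NumberField.PrimeIdealBound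

/-- For the ring of integers of a Galois number field, every nonzero
non-unit `x` avoids some prime ideal of prime norm `p ≤ C·log(C·N(x))`. -/
theorem stmt_2 (K : Type*) [Field K] [NumberField K] [IsGalois ℚ K] :
    ∃ C : ℝ, 0 < C ∧ ∀ x : 𝓞 K, x ≠ 0 → ¬ IsUnit x →
      ∃ (p : ℕ) (I : Ideal (𝓞 K)), p.Prime ∧ I.IsPrime ∧ x ∉ I ∧
        Ideal.absNorm I = p ∧
        (p : ℝ) ≤ C * Real.log (C * (Ideal.absNorm (Ideal.span {x}) : ℝ)) := by
  obtain ⟨b, hb, κ, X₀, hκ, hX₀, hθ⟩ := PrimeIdealBound.exists_le_sum_primeNormIdeals K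
  set d := Module.finrank ℚ K with hd
  have hd0 : 0 < d := Module.finrank_pos
  set B : ℝ := (2 * b : ℝ) ^ d with hB
  have hb' : (1 : ℝ) ≤ b := by exact_mod_cast hb
  have hB0 : 0 < B := by positivity
  set C : ℝ := Real.exp 1 + B / κ + B * (X₀ + 1) with hC
  have hCe : Real.exp 1 ≤ C := by
    have h1 : 0 ≤ B / κ := by positivity
    have h2 : 0 ≤ B * (X₀ + 1) := by positivity
    linarith
  have hC0 : 0 < C := (Real.exp_pos 1).trans_le hCe
  have hlogC : 1 ≤ Real.log C := (Real.le_log_iff_exp_le hC0).2 hCe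
  refine ⟨C, hC0, fun x hx _ => ?_⟩
  have hN : 0 < Ideal.absNorm (Ideal.span {x}) := by
    refine Nat.pos_of_ne_zero ?_
    simpa [Ideal.absNorm_eq_zero_iff] using hx
  set N := Ideal.absNorm (Ideal.span {x}) with hNdef
  set L := Real.log (N : ℝ) with hL
  have hL0 : 0 ≤ L := Real.log_natCast_nonneg _
  set Y : ℝ := L / κ + X₀ + 1 with hY
  have hY1 : 1 ≤ Y := by
    have : 0 ≤ L / κ := by positivity
    linarith
  set u : ℝ := Y ^ ((d : ℝ)⁻¹) with hu
  have hud : u ^ d = Y := Real.rpow_inv_natCast_pow (by linarith) hd0.ne'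
  have hu1 : 1 ≤ u := Real.one_le_rpow hY1 (by positivity)
  set r := ⌈u⌉₊
  have hur : u ≤ r := Nat.le_ceil u
  have hr2 : (r : ℝ) ≤ 2 * u := by
    have := Nat.ceil_lt_add_one (by linarith : 0 ≤ u)
    linarith
  have hr1 : 1 ≤ r := by exact_mod_cast hu1.trans hur
  have hlow : Y ≤ (b * r : ℝ) ^ d := by
    rw [← hud]
    gcongr
    nlinarith
  have hup : (b * r : ℝ) ^ d ≤ B * Y := by
    rw [← hud, hB, ← mul_pow]
    gcongr ?_ ^ d
    nlinarith
  have hsum := hθ r hr1 (by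
    have : 0 ≤ L / κ := by positivity
    linarith)
  have hbig : L < κ * (b * r : ℝ) ^ d := by
    calc L < κ * Y := by
          rw [hY]
          have : κ * (L / κ) = L := by field_simp
          nlinarith
      _ ≤ _ := by gcongr
  have hbound : B * Y ≤ C * Real.log (C * N) := by
    rw [Real.log_mul hC0.ne' (by positivity), ← hL]
    have h1 : B / κ ≤ C := by
      have : 0 ≤ B * (X₀ + 1) := by positivity
      linarith [Real.exp_pos 1]
    have h2 : B * (X₀ + 1) ≤ C := by
      have : 0 ≤ B / κ := by positivity
      linarith [Real.exp_pos 1]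
    calc B * Y = B / κ * L + B * (X₀ + 1) := by rw [hY]; ring
      _ ≤ C * L + C * 1 := by
          rw [mul_one]
          exact add_le_add (mul_le_mul_of_nonneg_right h1 hL0) h2
      _ ≤ C * L + C * Real.log C := by gcongr
      _ = _ := by ring
  obtain ⟨P, hP, hxP⟩ : ∃ P ∈ PrimeIdealBound.primeNormIdeals K ((b * r) ^ d), x ∉ P := by
    by_contra! hall
    have hprod := PrimeIdealBound.prod_absNorm_le hx _ fun P hP =>
      ⟨(PrimeIdealBound.mem_primeNormIdeals hP).1,
        (PrimeIdealBound.mem_primeNormIdeals hP).2.1, hall P hP⟩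
    have hpos : ∀ P ∈ PrimeIdealBound.primeNormIdeals K ((b * r) ^ d),
        0 < Ideal.absNorm P := fun P hP =>
      (PrimeIdealBound.mem_primeNormIdeals hP).2.2.1.pos
    rw [← Real.log_prod fun P hP => by exact_mod_cast (hpos P hP).ne'] at hsum
    have hle : Real.log (∏ P ∈ PrimeIdealBound.primeNormIdeals K ((b * r) ^ d),
        (Ideal.absNorm P : ℝ)) ≤ L := by
      refine Real.log_le_log (Finset.prod_pos fun P hP => by exact_mod_cast hpos P hP) ?_
      exact_mod_cast hprod
    linarith
  obtain ⟨hPprime, -, hp, hpX⟩ := PrimeIdealBound.mem_primeNormIdeals hP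
  refine ⟨Ideal.absNorm P, P, hp, hPprime, hxP, rfl, ?_⟩
  have hpX' : (Ideal.absNorm P : ℝ) ≤ (b * r : ℝ) ^ d := by exact_mod_cast hpX
  exact hpX'.trans (hup.trans hbound)
end

section
/- Let d : ℤ → ℤ be an antisymmetric function with d(1) = 1, and let G_d be the quotient of Hall's group G₀ by the central subgroup generated by {c_i c₁^{-d(i)} : i ∈ ℤ}. Then G_d is residually finite if and only if d mod q is a periodic function for infinitely many positive integers q. -/
/-- Generators of Hall's group: the shift `t`, and `a i`, `c i` for `i : ℤ`. -/
inductive Gen where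
  | t : Gen
  | a : ℤ → Gen
  | c : ℤ → Gen

/-- The commutator convention of the paper: `[x, y] = x⁻¹y⁻¹xy`. -/
def pcomm {G : Type*} [Group G] (x y : G) : G := x⁻¹ * y⁻¹ * x * y

/-- The relations of `G_d`: those of Hall's group `G₀` together with
`c i = (c 1) ^ d i`. -/
def rels (d : ℤ → ℤ) : Set (FreeGroup Gen) :=
  (Set.range fun i : ℤ =>
    FreeGroup.of Gen.t * FreeGroup.of (Gen.a i) * (FreeGroup.of Gen.t)⁻¹ *
      (FreeGroup.of (Gen.a (i + 1)))⁻¹) ∪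
  (Set.range fun i : ℤ =>
    FreeGroup.of Gen.t * FreeGroup.of (Gen.c i) * (FreeGroup.of Gen.t)⁻¹ *
      (FreeGroup.of (Gen.c i))⁻¹) ∪
  (Set.range fun p : ℤ × ℤ =>
    pcomm (FreeGroup.of (Gen.a p.1)) (FreeGroup.of (Gen.a p.2)) *
      (FreeGroup.of (Gen.c (p.1 - p.2)))⁻¹) ∪
  (Set.range fun p : ℤ × ℤ =>
    pcomm (FreeGroup.of (Gen.c p.1)) (FreeGroup.of (Gen.a p.2))) ∪
  (Set.range fun p : ℤ × ℤ =>
    pcomm (FreeGroup.of (Gen.c p.1)) (FreeGroup.of (Gen.c p.2))) ∪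
  (Set.range fun i : ℤ =>
    FreeGroup.of (Gen.c i) * ((FreeGroup.of (Gen.c 1)) ^ (d i))⁻¹)

/-- The quotient `G_d` of Hall's group. -/
abbrev Gd (d : ℤ → ℤ) := PresentedGroup (rels d)

namespace HallGroup

theorem pcomm_eq_iff {G : Type*} [Group G] (x y z : G) : pcomm x y = z ↔ x * y = y * x * z := by
  unfold pcomm
  constructor
  · rintro rfl
    group
  · intro h
    rw [mul_assoc, h]
    group

theorem pcomm_eq_one_iff {G : Type*} [Group G] (x y : G) : pcomm x y = 1 ↔ x * y = y * x := by
  simp [pcomm_eq_iff]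

theorem map_pcomm {G H : Type*} [Group G] [Group H] (f : G →* H) (x y : G) :
    f (pcomm x y) = pcomm (f x) (f y) := by
  simp [pcomm]

section Relations

variable (d : ℤ → ℤ)

/-- The image of `t` in `G_d`. -/
def t : Gd d := PresentedGroup.of Gen.t

/-- The image of `a i` in `G_d`. -/
def a (i : ℤ) : Gd d := PresentedGroup.of (Gen.a i)

/-- The image of `c i` in `G_d`. -/
def c (i : ℤ) : Gd d := PresentedGroup.of (Gen.c i)

variable {d}

theorem mk_of_eq_one {r : FreeGroup Gen} (hr : r ∈ rels d) :
    PresentedGroup.mk (rels d) r = 1 :=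
  PresentedGroup.one_of_mem hr

theorem t_mul_a (i : ℤ) : t d * a d i = a d (i + 1) * t d := by
  have h := mk_of_eq_one (d := d) (Or.inl <| Or.inl <| Or.inl <| Or.inl <| Or.inl ⟨i, rfl⟩)
  simp only [map_mul, map_inv] at h
  exact mul_inv_eq_iff_eq_mul.mp (mul_inv_eq_one.mp h)

theorem t_mul_c (i : ℤ) : t d * c d i = c d i * t d := by
  have h := mk_of_eq_one (d := d) (Or.inl <| Or.inl <| Or.inl <| Or.inl <| Or.inr ⟨i, rfl⟩)
  simp only [map_mul, map_inv] at h
  exact mul_inv_eq_iff_eq_mul.mp (mul_inv_eq_one.mp h)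

theorem pcomm_a_a (i j : ℤ) : pcomm (a d i) (a d j) = c d (i - j) := by
  have h := mk_of_eq_one (d := d) (Or.inl <| Or.inl <| Or.inl <| Or.inr ⟨(i, j), rfl⟩)
  simp only [map_mul, map_inv, map_pcomm] at h
  exact mul_inv_eq_one.mp h

theorem c_mul_a (i j : ℤ) : c d i * a d j = a d j * c d i := by
  have h := mk_of_eq_one (d := d) (Or.inl <| Or.inl <| Or.inr ⟨(i, j), rfl⟩)
  simp only [map_pcomm] at h
  exact (pcomm_eq_one_iff _ _).mp h

theorem c_mul_c (i j : ℤ) : c d i * c d j = c d j * c d i := by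
  have h := mk_of_eq_one (d := d) (Or.inl <| Or.inr ⟨(i, j), rfl⟩)
  simp only [map_pcomm] at h
  exact (pcomm_eq_one_iff _ _).mp h

theorem c_eq_zpow (i : ℤ) : c d i = c d 1 ^ d i := by
  have h := mk_of_eq_one (d := d) (Or.inr ⟨i, rfl⟩)
  simp only [map_mul, map_inv, map_zpow] at h
  exact mul_inv_eq_one.mp h

theorem t_zpow_mul_a (k i : ℤ) : t d ^ k * a d i = a d (i + k) * t d ^ k := by
  induction k generalizing i with
  | zero => simp
  | succ k ih =>
    rw [zpow_add_one, mul_assoc, t_mul_a, ← mul_assoc, ih, mul_assoc]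
    congr 2
    ring
  | pred k ih =>
    have h : (t d)⁻¹ * a d i = a d (i - 1) * (t d)⁻¹ := by
      rw [inv_mul_eq_iff_eq_mul, ← mul_assoc, t_mul_a]
      simp
    rw [zpow_sub_one, mul_assoc, h, ← mul_assoc, ih, mul_assoc]
    congr 2
    ring

theorem closure_generators :
    Subgroup.closure ({t d} ∪ Set.range (a d) ∪ Set.range (c d)) = ⊤ := by
  rw [← PresentedGroup.closure_range_of (rels d)]
  congr 1
  ext x
  simp only [Set.mem_union, Set.mem_singleton_iff, Set.mem_range]
  constructor
  · rintro ((rfl | ⟨i, rfl⟩) | ⟨i, rfl⟩)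
    exacts [⟨_, rfl⟩, ⟨_, rfl⟩, ⟨_, rfl⟩]
  · rintro ⟨_ | i | i, rfl⟩
    exacts [Or.inl (Or.inl rfl), Or.inl (Or.inr ⟨i, rfl⟩), Or.inr ⟨i, rfl⟩]

theorem c_mem_center (i : ℤ) : c d i ∈ Subgroup.center (Gd d) := by
  have h : Subgroup.closure ({t d} ∪ Set.range (a d) ∪ Set.range (c d)) ≤
      Subgroup.centralizer {c d i} := by
    rw [Subgroup.closure_le]
    rintro x ((rfl | ⟨j, rfl⟩) | ⟨j, rfl⟩) <;>
      rw [SetLike.mem_coe, Subgroup.mem_centralizer_singleton_iff]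
    exacts [t_mul_c i, (c_mul_a i j).symm, c_mul_c j i]
  rw [closure_generators] at h
  rw [Subgroup.mem_center_iff]
  intro g
  exact Subgroup.mem_centralizer_singleton_iff.mp (h (Subgroup.mem_top g))

instance : (Subgroup.zpowers (c d 1)).Normal :=
  ⟨fun x hx g => by
    have h : x ∈ Subgroup.center (Gd d) :=
      (Subgroup.zpowers_le.mpr (c_mem_center 1)) hx
    rwa [Subgroup.mem_center_iff.mp h g, mul_inv_cancel_right]⟩

end Relations

section Action

variable {I R : Type*} [CommRing I] [CommRing R]

/-- The action of `t` on `(I →₀ R) × R`: translation of the index set. -/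
noncomputable def shiftPerm (I R : Type*) [CommRing I] [CommRing R] :
    Equiv.Perm ((I →₀ R) × R) :=
  ((Finsupp.domLCongr (M := R) (R := R) (Equiv.addRight (1 : I))).toEquiv).prodCongr
    (Equiv.refl R)

/-- The action of `a i` on `(I →₀ R) × R`: a translation twisted by the kernel `b`. -/
noncomputable def translatePerm (b : I → R) (i : I) : Equiv.Perm ((I →₀ R) × R) where
  toFun p := (p.1 + Finsupp.single i 1,
    p.2 + Finsupp.linearCombination R (fun j => b (i - j)) p.1)
  invFun p := (p.1 - Finsupp.single i 1,
    p.2 - Finsupp.linearCombination R (fun j => b (i - j)) (p.1 - Finsupp.single i 1))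
  left_inv p := by simp
  right_inv p := by simp

/-- The action of central elements on `(I →₀ R) × R`. -/
def centralPerm (I : Type*) {R : Type*} [CommRing I] [CommRing R] (r : R) :
    Equiv.Perm ((I →₀ R) × R) :=
  (Equiv.refl _).prodCongr (Equiv.addRight r)

theorem shiftPerm_apply (p : (I →₀ R) × R) :
    shiftPerm I R p = (Finsupp.domLCongr (R := R) (Equiv.addRight (1 : I)) p.1, p.2) := rfl

theorem translatePerm_apply (b : I → R) (i : I) (p : (I →₀ R) × R) :
    translatePerm b i p = (p.1 + Finsupp.single i 1,
      p.2 + Finsupp.linearCombination R (fun j => b (i - j)) p.1) := rfl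

theorem centralPerm_apply (r : R) (p : (I →₀ R) × R) :
    centralPerm I r p = (p.1, p.2 + r) := rfl

theorem centralPerm_zpow (r : R) (n : ℤ) :
    centralPerm I r ^ n = centralPerm I ((n : R) * r) := by
  let f : Multiplicative R →* Equiv.Perm ((I →₀ R) × R) :=
    { toFun := fun s => centralPerm I s.toAdd
      map_one' := by ext1 p; simp [centralPerm_apply]
      map_mul' := fun s s' => by
        ext1 p
        simp [centralPerm_apply, add_assoc, add_comm s.toAdd] }
  have h := map_zpow f (Multiplicative.ofAdd r) n
  rw [← ofAdd_zsmul, zsmul_eq_mul] at h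
  exact h.symm

theorem shiftPerm_mul_translatePerm (b : I → R) (i : I) :
    shiftPerm I R * translatePerm b i = translatePerm b (i + 1) * shiftPerm I R := by
  ext1 p
  simp only [Equiv.Perm.mul_apply, shiftPerm_apply, translatePerm_apply, map_add,
    Finsupp.domLCongr_single, Equiv.coe_addRight, Prod.mk.injEq, true_and]
  rw [Finsupp.domLCongr_apply, Finsupp.domCongr_apply,
    Finsupp.linearCombination_equivMapDomain]
  congr 3
  ext j
  simp

theorem translatePerm_mul_translatePerm (b : I → R) (i j : I) :
    translatePerm b i * translatePerm b j =
      translatePerm b j * translatePerm b i * centralPerm I (b (i - j) - b (j - i)) := by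
  ext1 p
  simp only [Equiv.Perm.mul_apply, centralPerm_apply, translatePerm_apply, map_add,
    Finsupp.linearCombination_single, Prod.mk.injEq, one_smul]
  constructor
  · abel
  · ring

/-- The images of the generators under the action of `G_d` on `(I →₀ R) × R`. -/
noncomputable def genPerm (d : ℤ → ℤ) (b : I → R) (u : R) : Gen → Equiv.Perm ((I →₀ R) × R)
  | Gen.t => shiftPerm I R
  | Gen.a i => translatePerm b i
  | Gen.c i => centralPerm I (d i * u)

theorem lift_genPerm_eq_one (d : ℤ → ℤ) (hd1 : d 1 = 1) (b : I → R) (u : R)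
    (hb : ∀ i : ℤ, b i - b (-i) = d i * u) :
    ∀ r ∈ rels d, FreeGroup.lift (genPerm d b u) r = 1 := by
  rintro r (((((⟨i, rfl⟩ | ⟨i, rfl⟩) | ⟨⟨i, j⟩, rfl⟩) | ⟨⟨i, j⟩, rfl⟩) | ⟨⟨i, j⟩, rfl⟩) | ⟨i, rfl⟩)
  · simp only [map_mul, map_inv, FreeGroup.lift_apply_of, genPerm]
    rw [shiftPerm_mul_translatePerm]
    simp
  · simp only [map_mul, map_inv, FreeGroup.lift_apply_of, genPerm]
    rw [mul_inv_eq_one, mul_inv_eq_iff_eq_mul]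
    rfl
  · simp only [map_mul, map_inv, map_pcomm, FreeGroup.lift_apply_of, genPerm]
    rw [mul_inv_eq_one, pcomm_eq_iff, translatePerm_mul_translatePerm, ← hb]
    simp
  · simp only [map_pcomm, FreeGroup.lift_apply_of, genPerm]
    rw [pcomm_eq_one_iff]
    ext1 p
    simp only [Equiv.Perm.mul_apply, centralPerm_apply, translatePerm_apply, Prod.mk.injEq,
      true_and]
    ring
  · simp only [map_pcomm, FreeGroup.lift_apply_of, genPerm]
    rw [pcomm_eq_one_iff]
    ext1 p
    simp only [Equiv.Perm.mul_apply, centralPerm_apply, Prod.mk.injEq, true_and]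
    ring
  · simp only [map_mul, map_inv, map_zpow, FreeGroup.lift_apply_of, genPerm]
    rw [mul_inv_eq_one, centralPerm_zpow, hd1]
    simp

/-- The action of `G_d` on `(I →₀ R) × R`. -/
noncomputable def action (d : ℤ → ℤ) (hd1 : d 1 = 1) (b : I → R) (u : R)
    (hb : ∀ i : ℤ, b i - b (-i) = d i * u) : Gd d →* Equiv.Perm ((I →₀ R) × R) :=
  PresentedGroup.toGroup (lift_genPerm_eq_one d hd1 b u hb)

variable {d : ℤ → ℤ} {hd1 : d 1 = 1} {b : I → R} {u : R}
  {hb : ∀ i : ℤ, b i - b (-i) = d i * u}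

theorem action_t : action d hd1 b u hb (t d) = shiftPerm I R :=
  PresentedGroup.toGroup.of _

theorem action_a (i : ℤ) : action d hd1 b u hb (a d i) = translatePerm b i :=
  PresentedGroup.toGroup.of _

theorem action_c_zpow (n : ℤ) :
    action d hd1 b u hb (c d 1 ^ n) = centralPerm I ((n : R) * u) := by
  have h : action d hd1 b u hb (c d 1) = centralPerm I (d 1 * u) := PresentedGroup.toGroup.of _
  rw [map_zpow, h, centralPerm_zpow, hd1]
  simp

theorem centralPerm_eq_one_iff (r : R) : centralPerm I r = 1 ↔ r = 0 := by
  constructor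
  · intro h
    have := congrArg (fun σ => (σ ((0 : I →₀ R), (0 : R))).2) h
    simpa [centralPerm_apply] using this
  · rintro rfl
    ext1 p
    simp [centralPerm_apply]

theorem shiftPerm_zpow_single (k : ℤ) (i : I) (r s : R) :
    (shiftPerm I R ^ k) (Finsupp.single i r, s) = (Finsupp.single (i + k) r, s) := by
  induction k generalizing i with
  | zero => simp
  | succ k ih =>
    rw [zpow_add_one, Equiv.Perm.mul_apply, shiftPerm_apply]
    simp only [Finsupp.domLCongr_single, Equiv.coe_addRight]
    rw [ih]
    congr 2
    push_cast
    ring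
  | pred k ih =>
    have h : (shiftPerm I R)⁻¹ (Finsupp.single i r, s) = (Finsupp.single (i - 1) r, s) := by
      rw [Equiv.Perm.inv_eq_iff_eq, shiftPerm_apply]
      simp
    rw [zpow_sub_one, Equiv.Perm.mul_apply, h, ih]
    congr 2
    push_cast
    ring

end Action

section NormalForm

variable {d : ℤ → ℤ}

/-- The quotient of `G_d` by its central subgroup generated by `c 1`. -/
abbrev CentralQuotient (d : ℤ → ℤ) := Gd d ⧸ Subgroup.zpowers (c d 1)

theorem mk_c (i : ℤ) : (c d i : CentralQuotient d) = 1 := by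
  rw [QuotientGroup.eq_one_iff]
  exact Subgroup.mem_zpowers_iff.mpr ⟨d i, (c_eq_zpow i).symm⟩

theorem mk_a_comm (i j : ℤ) :
    (a d i : CentralQuotient d) * a d j = a d j * a d i := by
  refine (pcomm_eq_one_iff (a d i : CentralQuotient d) (a d j)).mp ?_
  have h := map_pcomm (QuotientGroup.mk' (Subgroup.zpowers (c d 1))) (a d i) (a d j)
  rw [pcomm_a_a] at h
  exact h.symm.trans (mk_c _)

/-- There is a homomorphism from the free abelian group on `ℤ` to the central quotient sending the
basis vector at `i` to the class of `a i`. -/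
theorem exists_hom_single (d : ℤ → ℤ) :
    ∃ f : Multiplicative (ℤ →₀ ℤ) →* CentralQuotient d,
      ∀ i, f (Multiplicative.ofAdd (Finsupp.single i 1)) = a d i := by
  let S : Set (CentralQuotient d) := Set.range fun i => (a d i : CentralQuotient d)
  have hS : ∀ x ∈ S, ∀ y ∈ S, x * y = y * x := by
    rintro _ ⟨i, rfl⟩ _ ⟨j, rfl⟩
    exact mk_a_comm i j
  let _ : CommGroup (Subgroup.closure S) :=
    { (inferInstance : Group (Subgroup.closure S)) with
      mul_comm := (Subgroup.isMulCommutative_closure hS).is_comm.comm }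
  let e : ℤ → Subgroup.closure S := fun i => ⟨a d i, Subgroup.subset_closure ⟨i, rfl⟩⟩
  let F : (ℤ →₀ ℤ) →+ Additive (Subgroup.closure S) :=
    Finsupp.liftAddHom fun i => zmultiplesHom _ (Additive.ofMul (e i))
  refine ⟨(Subgroup.closure S).subtype.comp (AddMonoidHom.toMultiplicativeLeft F), fun i => ?_⟩
  simp [F, e]

theorem exists_normal_form (f : Multiplicative (ℤ →₀ ℤ) →* CentralQuotient d)
    (hf : ∀ i, f (Multiplicative.ofAdd (Finsupp.single i 1)) = a d i) (g : Gd d) :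
    ∃ (k : ℤ) (x : ℤ →₀ ℤ),
      (g : CentralQuotient d) = (t d : CentralQuotient d) ^ k * f (Multiplicative.ofAdd x) := by
  have hta (k i : ℤ) : (a d i : CentralQuotient d) * (t d : CentralQuotient d) ^ k =
      (t d : CentralQuotient d) ^ k * a d (i - k) := by
    have h := congrArg (QuotientGroup.mk' (Subgroup.zpowers (c d 1)))
      (t_zpow_mul_a (d := d) k (i - k))
    rw [sub_add_cancel] at h
    simpa using h.symm
  have hg : g ∈ Subgroup.closure ({t d} ∪ Set.range (a d) ∪ Set.range (c d)) := by
    rw [closure_generators]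
    trivial
  induction hg using Subgroup.closure_induction_left with
  | one => exact ⟨0, 0, by simp⟩
  | mul_left x hx y hy ih =>
    obtain ⟨k, v, h⟩ := ih
    rcases hx with ((rfl | ⟨i, rfl⟩) | ⟨i, rfl⟩)
    · exact ⟨1 + k, v, by rw [QuotientGroup.mk_mul, h, zpow_one_add, mul_assoc]⟩
    · refine ⟨k, Finsupp.single (i - k) 1 + v, ?_⟩
      rw [QuotientGroup.mk_mul, h, ← mul_assoc, hta, ofAdd_add, map_mul, hf, mul_assoc]
    · exact ⟨k, v, by rw [QuotientGroup.mk_mul, h, mk_c, one_mul]⟩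
  | inv_mul_cancel x hx y hy ih =>
    obtain ⟨k, v, h⟩ := ih
    rcases hx with ((rfl | ⟨i, rfl⟩) | ⟨i, rfl⟩)
    · refine ⟨-1 + k, v, ?_⟩
      rw [QuotientGroup.mk_mul, h, zpow_add, zpow_neg_one, QuotientGroup.mk_inv, mul_assoc]
    · refine ⟨k, -Finsupp.single (i - k) 1 + v, ?_⟩
      rw [QuotientGroup.mk_mul, h, QuotientGroup.mk_inv, inv_mul_eq_iff_eq_mul, ← mul_assoc,
        hta, ofAdd_add, ofAdd_neg, map_mul, map_inv, hf, mul_assoc, mul_inv_cancel_left]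
    · exact ⟨k, v, by rw [QuotientGroup.mk_mul, h, QuotientGroup.mk_inv, mk_c, inv_one, one_mul]⟩

end NormalForm

section Separation

variable {d : ℤ → ℤ}

theorem exists_finiteIndex_of_hom {G H : Type*} [Group G] [Group H] [Finite H] (f : G →* H)
    {g : G} (hg : f g ≠ 1) : ∃ N : Subgroup G, N.Normal ∧ N.FiniteIndex ∧ g ∉ N :=
  ⟨f.ker, inferInstance, Subgroup.finiteIndex_ker f, hg⟩

/-- Reduction of indices modulo `n` and coefficients modulo `m`. -/
noncomputable def reduce (n m : ℕ) : (ℤ →₀ ℤ) →+ (ZMod n →₀ ZMod m) :=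
  (Finsupp.mapDomain.addMonoidHom (Int.cast : ℤ → ZMod n)).comp
    (Finsupp.mapRange.addMonoidHom (Int.castAddHom (ZMod m)))

theorem reduce_single (n m : ℕ) (i r : ℤ) :
    reduce n m (Finsupp.single i r) = Finsupp.single (i : ZMod n) (r : ZMod m) := by
  simp [reduce, Finsupp.mapDomain_single]

theorem exists_reduce_ne_zero {x : ℤ →₀ ℤ} (hx : x ≠ 0) :
    ∃ n m : ℕ, 0 < n ∧ 0 < m ∧ reduce n m x ≠ 0 := by
  obtain ⟨j, hj⟩ := Finsupp.ne_iff.mp hx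
  rw [Finsupp.coe_zero, Pi.zero_apply] at hj
  let n : ℕ := (∑ i ∈ x.support, (i - j).natAbs) + 1
  have hn : ∀ i ∈ x.support, (i : ZMod n) = j → i = j := by
    intro i hi h
    rw [eq_comm, ZMod.intCast_eq_intCast_iff_dvd_sub] at h
    have hle := Finset.single_le_sum (f := fun i => (i - j).natAbs) (fun _ _ => Nat.zero_le _) hi
    have := Int.eq_zero_of_dvd_of_natAbs_lt_natAbs h (by simp only [n, Int.natAbs_natCast]; omega)
    omega
  refine ⟨n, (x j).natAbs + 1, Nat.succ_pos _, Nat.succ_pos _, fun h => ?_⟩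
  have hval (m : ℕ) : reduce n m x (j : ZMod n) = (x j : ZMod m) := by
    conv_lhs => rw [← Finsupp.sum_single x, Finsupp.sum, map_sum]
    rw [Finsupp.finsetSum_apply, Finset.sum_eq_single j]
    · simp [reduce_single]
    · intro i hi hij
      rw [reduce_single, Finsupp.single_eq_of_ne]
      exact fun h => hij (hn i hi h.symm)
    · intro hjs
      exact absurd (Finsupp.mem_support_iff.mpr hj) hjs
  have hdvd := hval ((x j).natAbs + 1)
  rw [h, Finsupp.coe_zero, Pi.zero_apply, eq_comm, ZMod.intCast_zmod_eq_zero_iff_dvd] at hdvd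
  exact hj (Int.eq_zero_of_dvd_of_natAbs_lt_natAbs hdvd (by simp only [Int.natAbs_natCast]; omega))

theorem exists_finiteIndex_of_notMem_zpowers (hd1 : d 1 = 1) {g : Gd d}
    (hg : g ∉ Subgroup.zpowers (c d 1)) :
    ∃ N : Subgroup (Gd d), N.Normal ∧ N.FiniteIndex ∧ g ∉ N := by
  obtain ⟨f, hf⟩ := exists_hom_single d
  obtain ⟨k, x, hgx⟩ := exists_normal_form f hf g
  have key (n m : ℕ) : ∃ ψ : Gd d →* Equiv.Perm ((ZMod n →₀ ZMod m) × ZMod m),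
      ∀ v, ψ g (v, 0) = (shiftPerm (ZMod n) (ZMod m) ^ k) (v + reduce n m x, 0) := by
    let ψ := action (I := ZMod n) (R := ZMod m) d hd1 0 0 (by simp)
    have hψ : Subgroup.zpowers (c d 1) ≤ ψ.ker := by
      rw [Subgroup.zpowers_le, MonoidHom.mem_ker]
      have := action_c_zpow (I := ZMod n) (R := ZMod m) (d := d) (hd1 := hd1) (b := 0) (u := 0)
        (hb := by simp) 1
      rw [zpow_one] at this
      rw [this, centralPerm_eq_one_iff, mul_zero]
    let χ := QuotientGroup.lift (Subgroup.zpowers (c d 1)) ψ hψ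
    have hχ (y : ℤ →₀ ℤ) (v : ZMod n →₀ ZMod m) :
        χ (f (Multiplicative.ofAdd y)) (v, 0) = (v + reduce n m y, 0) := by
      let T : Multiplicative (ℤ →₀ ℤ) →* Equiv.Perm ((ZMod n →₀ ZMod m) × ZMod m) :=
        { toFun := fun y => (Equiv.addRight (reduce n m y.toAdd)).prodCongr (Equiv.refl _)
          map_one' := by ext1 p; simp
          map_mul' := fun y z => by
            ext1 p
            simp [Prod.ext_iff, add_assoc, add_comm (reduce n m y.toAdd)] }
      have hT : χ.comp f = T := by
        refine Finsupp.mulHom_ext' fun i => MonoidHom.ext_mint ?_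
        change χ (f (Multiplicative.ofAdd (Finsupp.single i 1))) =
          T (Multiplicative.ofAdd (Finsupp.single i 1))
        rw [hf]
        refine (action_a (hd1 := hd1) (hb := by simp) i).trans ?_
        ext1 p
        simp [T, Prod.ext_iff, translatePerm_apply, reduce_single, Finsupp.linearCombination_apply]
      exact congrArg (fun φ => φ (Multiplicative.ofAdd y) (v, 0)) hT
    refine ⟨ψ, fun v => ?_⟩
    change χ (g : CentralQuotient d) (v, 0) = _
    rw [hgx, map_mul, map_zpow, Equiv.Perm.mul_apply, hχ]
    congr 2
  by_cases hx : x = 0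
  · subst hx
    have hk : k ≠ 0 := by
      rintro rfl
      apply hg
      rw [← QuotientGroup.eq_one_iff]
      simpa using hgx
    obtain ⟨ψ, hψ⟩ := key (k.natAbs + 1) 2
    refine exists_finiteIndex_of_hom ψ fun h => ?_
    have h' := hψ (Finsupp.single 0 1)
    rw [h, map_zero, add_zero, shiftPerm_zpow_single, Equiv.Perm.one_apply, Prod.mk.injEq,
      Finsupp.single_left_inj one_ne_zero, zero_add, eq_comm,
      ZMod.intCast_zmod_eq_zero_iff_dvd] at h'
    exact hk (Int.eq_zero_of_dvd_of_natAbs_lt_natAbs h'.1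
      (by simp only [Int.natAbs_natCast]; omega))
  · obtain ⟨n, m, hn, hm, hne⟩ := exists_reduce_ne_zero hx
    have : NeZero n := ⟨hn.ne'⟩
    have : NeZero m := ⟨hm.ne'⟩
    obtain ⟨ψ, hψ⟩ := key n m
    refine exists_finiteIndex_of_hom ψ fun h => hne ?_
    have h' := hψ 0
    have h0 : (shiftPerm (ZMod n) (ZMod m) ^ k) (0, 0) = (0, 0) := by
      simpa using shiftPerm_zpow_single (I := ZMod n) (R := ZMod m) k 0 0 0
    rw [h, Equiv.Perm.one_apply, zero_add, ← h0, (Equiv.injective _).eq_iff] at h'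
    exact (Prod.mk.inj h').1.symm

/-- A periodic antisymmetric function modulo `q` is the antisymmetrization of a periodic one. -/
theorem exists_antisymmetrization (hanti : ∀ i : ℤ, d (-i) = -d i) {q P : ℕ} (hP : 0 < P)
    (hper : ∀ i : ℤ, (d (i + P) : ZMod q) = (d i : ZMod q)) :
    ∃ b : ZMod (2 * P) → ZMod q, ∀ i : ℤ, b i - b (-i) = d i := by
  have : NeZero (2 * P) := ⟨by omega⟩
  have hd0 : d 0 = 0 := by
    have := hanti 0
    simp only [neg_zero] at this
    omega
  have hperP : Function.Periodic (fun i : ℤ => (d i : ZMod q)) (P : ℤ) := hper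
  have hmod (i k : ℤ) : (d (i + k * P) : ZMod q) = d i := by
    simpa using hperP.int_mul k i
  refine ⟨fun i => if i.val < P then (d i.val : ZMod q) else 0, fun i => ?_⟩
  have hr0 : 0 ≤ i % (2 * P : ℕ) := Int.emod_nonneg _ (by omega)
  have hr1 : i % (2 * P : ℕ) < (2 * P : ℕ) := Int.emod_lt_of_pos _ (by omega)
  have hir : ((i : ZMod (2 * P)).val : ℤ) = i % (2 * P : ℕ) := ZMod.val_intCast i
  have hdi : (d i : ZMod q) = d (i % (2 * P : ℕ)) := by
    conv_lhs => rw [← Int.emod_add_mul_ediv i (2 * P : ℕ)]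
    rw [← hmod (i % (2 * P : ℕ)) (2 * (i / (2 * P : ℕ)))]
    congr 2
    push_cast
    ring
  have hneg : (-(i : ZMod (2 * P))).val =
      if (i : ZMod (2 * P)).val = 0 then 0 else 2 * P - (i : ZMod (2 * P)).val := by
    rw [ZMod.neg_val]
    simp only [ZMod.val_eq_zero]
  simp only [hneg]
  rw [hdi, ← hir]
  rw [← hir] at hr0 hr1
  generalize (i : ZMod (2 * P)).val = r at hr0 hr1
  have hsub (hrP : P < r) : (d ((2 * P - r : ℕ) : ℤ) : ZMod q) = -d r := by
    rw [← Int.cast_neg, ← hanti, ← hmod (-r) 2]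
    congr 2
    omega
  by_cases h0 : r = 0
  · subst h0
    simp [hP, hd0]
  rw [if_neg h0]
  rcases lt_trichotomy r P with h | rfl | h
  · rw [if_pos h, if_neg (by omega), sub_zero]
  · have := hper 0
    rw [zero_add, hd0] at this
    rw [if_neg (by omega), if_neg (by omega), this]
    simp
  · rw [if_neg (by omega), if_pos (by omega), hsub h]
    simp

theorem exists_finiteIndex_of_zpow (hanti : ∀ i : ℤ, d (-i) = -d i) (hd1 : d 1 = 1)
    {q P : ℕ} (hP : 0 < P) (hper : ∀ i : ℤ, (d (i + P) : ZMod q) = (d i : ZMod q))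
    {z : ℤ} (hz : z ≠ 0) (hzq : z.natAbs < q) :
    ∃ N : Subgroup (Gd d), N.Normal ∧ N.FiniteIndex ∧ c d 1 ^ z ∉ N := by
  have : NeZero (2 * P) := ⟨by omega⟩
  have : NeZero q := ⟨by omega⟩
  obtain ⟨b, hb⟩ := exists_antisymmetrization hanti hP hper
  refine exists_finiteIndex_of_hom (action d hd1 b 1 (by simpa using hb)) fun h => ?_
  rw [action_c_zpow, centralPerm_eq_one_iff, mul_one, ZMod.intCast_zmod_eq_zero_iff_dvd] at h
  exact hz (Int.eq_zero_of_dvd_of_natAbs_lt_natAbs h (by simpa using hzq))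

theorem c_zpow_ne_one (hanti : ∀ i : ℤ, d (-i) = -d i) (hd1 : d 1 = 1) {z : ℤ} (hz : z ≠ 0) :
    c d 1 ^ z ≠ 1 := by
  have hd0 : d 0 = 0 := by
    have := hanti 0
    simp only [neg_zero] at this
    omega
  have hb (i : ℤ) : (fun j : ℤ => if 0 < j then d j else 0) (i : ℤ) -
      (fun j : ℤ => if 0 < j then d j else 0) (-(i : ℤ)) = d i := by
    rcases lt_trichotomy i 0 with h | rfl | h
    · simp [h, h.le, hanti]
    · simp [hd0]
    · simp [h, h.le]
  intro h
  have h' := congrArg (action (I := ℤ) (R := ℤ) d hd1 (fun j : ℤ => if 0 < j then d j else 0) 1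
    (by simpa using hb)) h
  rw [action_c_zpow, map_one, centralPerm_eq_one_iff] at h'
  exact hz (by simpa using h')

/-- In a finite quotient of `G_d` the function `d` is periodic modulo the order of `c 1`. -/
theorem exists_period_of_finiteIndex (N : Subgroup (Gd d)) [N.Normal] [N.FiniteIndex] :
    ∃ P : ℕ, 0 < P ∧ ∀ i : ℤ, (d (i + P) : ZMod (orderOf (c d 1 : Gd d ⧸ N))) =
      (d i : ZMod (orderOf (c d 1 : Gd d ⧸ N))) := by
  refine ⟨orderOf (t d : Gd d ⧸ N), orderOf_pos _, fun i => ?_⟩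
  have ha : (a d (i + orderOf (t d : Gd d ⧸ N)) : Gd d ⧸ N) = a d i := by
    have h := congrArg (QuotientGroup.mk' N)
      (t_zpow_mul_a (d := d) (orderOf (t d : Gd d ⧸ N)) i)
    simpa [pow_orderOf_eq_one] using h.symm
  have hc (j : ℤ) : (c d 1 : Gd d ⧸ N) ^ d j = pcomm (a d j : Gd d ⧸ N) (a d 0) := by
    have h := map_pcomm (QuotientGroup.mk' N) (a d j) (a d 0)
    rw [pcomm_a_a, sub_zero, c_eq_zpow] at h
    simpa using h
  rw [ZMod.intCast_eq_intCast_iff, ← zpow_eq_zpow_iff_modEq, hc, hc, ha]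

end Separation

end HallGroup

open HallGroup in
/-- For `d : ℤ → ℤ` antisymmetric with `d 1 = 1`, the group `G_d` is
residually finite if and only if `d mod q` is periodic for infinitely many positive
integers `q`. -/
theorem stmt_5 (d : ℤ → ℤ) (hanti : ∀ i : ℤ, d (-i) = -d i) (hd1 : d 1 = 1) :
    (∀ g : Gd d, g ≠ 1 →
        ∃ N : Subgroup (Gd d), N.Normal ∧ N.FiniteIndex ∧ g ∉ N) ↔
      {q : ℕ | 0 < q ∧ ∃ P : ℕ, 0 < P ∧
        ∀ i : ℤ, ((d (i + P) : ZMod q) = (d i : ZMod q))}.Infinite := by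
  constructor
  · intro hres
    refine Set.infinite_of_forall_exists_gt fun n => ?_
    obtain ⟨N, hN, hfin, hmem⟩ := hres (c d 1 ^ (n.factorial : ℤ))
      (c_zpow_ne_one hanti hd1 (by exact_mod_cast n.factorial_ne_zero))
    refine ⟨orderOf (c d 1 : Gd d ⧸ N), ⟨orderOf_pos _, exists_period_of_finiteIndex N⟩, ?_⟩
    by_contra! hle
    apply hmem
    rw [← QuotientGroup.eq_one_iff, zpow_natCast, QuotientGroup.mk_pow,
      ← orderOf_dvd_iff_pow_eq_one]
    exact Nat.dvd_factorial (orderOf_pos _) hle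
  · intro hinf g hg
    by_cases hgc : g ∈ Subgroup.zpowers (c d 1)
    · obtain ⟨z, rfl⟩ := Subgroup.mem_zpowers_iff.mp hgc
      have hz : z ≠ 0 := by
        rintro rfl
        exact hg (zpow_zero _)
      obtain ⟨q, ⟨-, P, hP, hper⟩, hq⟩ := hinf.exists_gt z.natAbs
      exact exists_finiteIndex_of_zpow hanti hd1 hP hper hz hq
    · exact exists_finiteIndex_of_notMem_zpowers hd1 hgc
end
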